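/- arXiv:2507.06225 — 9 statements merged into one kernel-verified Lean document; each statement's English description precedes it below -/
import Mathlib

section
/- Let M be a matroid of rank r ≥ 1 on an n-element ground set E(M). There exists an element e ∈ E(M) contained in no nonbasis of M (i.e., every r-element subset of E(M) containing e is a basis of M) if and only if M is a free extension N + e' of a paving matroid N of rank r, or M is isomorphic to the direct sum U(1,1) ⊕ U(r−1, n−1). -/
open scoped BigOperators TensorProduct

namespace MatroidGame

/-- A "pre-matroid": a finite ground set together with a distinguished collection of
finsets (intended to be the bases). -/
structure PreMatroid (α : Type*) where
  E : Finset α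
  bases : Finset (Finset α)

namespace PreMatroid

variable {α : Type*} [DecidableEq α]

/-- The paper's definition of a matroid: a nonempty collection of `r`-element subsets of the
ground set satisfying the basis exchange axiom. -/
def IsMatroid (M : PreMatroid α) : Prop :=
  M.bases.Nonempty ∧
    (∀ B ∈ M.bases, B ⊆ M.E) ∧
    (∀ B₁ ∈ M.bases, ∀ B₂ ∈ M.bases, B₁.card = B₂.card) ∧
    (∀ B₁ ∈ M.bases, ∀ B₂ ∈ M.bases, ∀ a ∈ B₁ \ B₂,
      ∃ b ∈ B₂ \ B₁, insert b (B₁.erase a) ∈ M.bases)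

/-- A set is independent if it is contained in a basis. -/
def Indep (M : PreMatroid α) (I : Finset α) : Prop :=
  ∃ B ∈ M.bases, I ⊆ B

instance (M : PreMatroid α) : DecidablePred M.Indep := fun I =>
  inferInstanceAs (Decidable (∃ B ∈ M.bases, I ⊆ B))

/-- The rank of a subset: the maximal size of an independent subset of it. -/
def rkSet (M : PreMatroid α) (X : Finset α) : ℕ :=
  (X.powerset.filter fun I => M.Indep I).sup Finset.card

/-- The rank of the matroid. -/
def rk (M : PreMatroid α) : ℕ := M.rkSet M.E

/-- A circuit is a minimal dependent subset of the ground set. -/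
def Circuit (M : PreMatroid α) (C : Finset α) : Prop :=
  C ⊆ M.E ∧ ¬M.Indep C ∧ ∀ D ⊂ C, M.Indep D

/-- A matroid is paving if every circuit has size at least the rank. -/
def Paving (M : PreMatroid α) : Prop := ∀ C, M.Circuit C → M.rk ≤ C.card

/-- The dual matroid: bases are complements of bases. -/
def dual (M : PreMatroid α) : PreMatroid α := ⟨M.E, M.bases.image fun B => M.E \ B⟩

/-- A matroid is sparse paving if both it and its dual are paving. -/
def SparsePaving (M : PreMatroid α) : Prop := M.Paving ∧ M.dual.Paving

/-- The closure of a set. -/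
def cl (M : PreMatroid α) (X : Finset α) : Finset α :=
  M.E.filter fun b => M.rkSet (insert b X) = M.rkSet X

/-- A flat is a closed subset. -/
def IsFlat (M : PreMatroid α) (F : Finset α) : Prop := F ⊆ M.E ∧ M.cl F = F

/-- A hyperplane is a flat of rank `rk M - 1`. -/
def IsHyperplane (M : PreMatroid α) (H : Finset α) : Prop :=
  M.IsFlat H ∧ M.rkSet H = M.rk - 1

/-- A cyclic hyperplane is a hyperplane which is a union of circuits. -/
def IsCyclicHyperplane (M : PreMatroid α) (H : Finset α) : Prop :=
  M.IsHyperplane H ∧ ∀ x ∈ H, ∃ C, M.Circuit C ∧ C ⊆ H ∧ x ∈ C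

/-- A loop is a ground set element contained in no basis. -/
def IsLoop (M : PreMatroid α) (a : α) : Prop := a ∈ M.E ∧ ∀ B ∈ M.bases, a ∉ B

/-- A coloop is a ground set element contained in every basis. -/
def IsColoop (M : PreMatroid α) (a : α) : Prop := a ∈ M.E ∧ ∀ B ∈ M.bases, a ∈ B

def Loopless (M : PreMatroid α) : Prop := ∀ a, ¬M.IsLoop a

/-- A matroid is simple if it has no loops and every rank-1 subset is a singleton. -/
def Simple (M : PreMatroid α) : Prop :=
  M.Loopless ∧ ∀ X ⊆ M.E, M.rkSet X = 1 → X.card = 1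

/-- The restriction `M | Y`: its independent sets are the independent sets of `M` contained
in `Y`, and its bases are the maximal such sets. -/
def restrict (M : PreMatroid α) (Y : Finset α) : PreMatroid α :=
  ⟨Y, Y.powerset.filter fun B =>
      M.Indep B ∧ ∀ I ∈ Y.powerset, M.Indep I → B ⊆ I → I = B⟩

/-- `M` is the free extension of `N` by the new element `e`. -/
def IsFreeExtension (M N : PreMatroid α) (e : α) : Prop :=
  e ∉ N.E ∧ M.E = insert e N.E ∧
    ∀ B : Finset α, B ∈ M.bases ↔
      (B ∈ N.bases ∨ ∃ A : Finset α, N.Indep A ∧ A.card = N.rk - 1 ∧ B = insert e A)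

/-- The uniform matroid of rank `k` on the ground set `E`. -/
def uniform {β : Type*} (E : Finset β) (k : ℕ) : PreMatroid β := ⟨E, E.powersetCard k⟩

/-- The direct sum of two matroids. -/
def directSum {β γ : Type*} [DecidableEq β] [DecidableEq γ] (M : PreMatroid β)
    (N : PreMatroid γ) : PreMatroid (β ⊕ γ) :=
  ⟨M.E.map ⟨Sum.inl, Sum.inl_injective⟩ ∪ N.E.map ⟨Sum.inr, Sum.inr_injective⟩,
    (M.bases ×ˢ N.bases).image fun p =>
      p.1.map ⟨Sum.inl, Sum.inl_injective⟩ ∪ p.2.map ⟨Sum.inr, Sum.inr_injective⟩⟩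

/-- `φ` realizes an isomorphism of matroids: it is a bijection of the ground sets such that a
subset of the ground set is a basis iff its image is a basis. -/
def IsIsoMap {β γ : Type*} [DecidableEq γ] (M : PreMatroid β) (N : PreMatroid γ)
    (φ : β → γ) : Prop :=
  Set.BijOn φ ↑M.E ↑N.E ∧ ∀ B ⊆ M.E, (B ∈ M.bases ↔ B.image φ ∈ N.bases)

/-- Two matroids are isomorphic. -/
def Iso {β γ : Type*} [DecidableEq γ] (M : PreMatroid β) (N : PreMatroid γ) : Prop :=
  ∃ φ : β → γ, M.IsIsoMap N φ

end PreMatroid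

/-- The pointed sets `S•`: pairs `(A, p)` with `A ∈ S` and `p ∈ A`. -/
abbrev PtSet {α : Type*} (S : Finset (Finset α)) : Type _ :=
  {v : Finset α × α // v.1 ∈ S ∧ v.2 ∈ v.1}

/-- The relation `rel` on pointed sets, valued in `{0,1,2,3}`. -/
def relNum {α : Type*} [DecidableEq α] (a b : Finset α × α) : ℕ :=
  if a.1 = b.1 then (if a.2 = b.2 then 0 else 2) else (if a.2 = b.2 then 1 else 3)

/-- `S` covers the ground set `E` if every element of `E` lies in a member of `S`. -/
def Covers {α : Type*} (S : Finset (Finset α)) (E : Finset α) : Prop :=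
  ∀ a ∈ E, ∃ A ∈ S, a ∈ A

noncomputable section

/-- The defining relations of the quantum isomorphism (magic unitary) algebra `𝔖(I,J)`. -/
inductive MagicRel (I J : Type*) [Fintype I] [Fintype J] :
    FreeAlgebra ℂ (I × J) → FreeAlgebra ℂ (I × J) → Prop
  | idem (a : I) (x : J) :
      MagicRel I J (FreeAlgebra.ι ℂ (a, x) * FreeAlgebra.ι ℂ (a, x)) (FreeAlgebra.ι ℂ (a, x))
  | row (a : I) {x y : J} (h : x ≠ y) :
      MagicRel I J (FreeAlgebra.ι ℂ (a, x) * FreeAlgebra.ι ℂ (a, y)) 0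
  | col {a b : I} (x : J) (h : a ≠ b) :
      MagicRel I J (FreeAlgebra.ι ℂ (a, x) * FreeAlgebra.ι ℂ (b, x)) 0
  | rowSum (a : I) : MagicRel I J (∑ x : J, FreeAlgebra.ι ℂ (a, x)) 1
  | colSum (x : J) : MagicRel I J (∑ a : I, FreeAlgebra.ι ℂ (a, x)) 1

/-- The quantum isomorphism algebra `𝔖(I,J)`. -/
abbrev MagicAlgebra (I J : Type*) [Fintype I] [Fintype J] := RingQuot (MagicRel I J)

/-- The generator `u_{a x}` of `𝔖(I,J)`. -/
def magicGen (I J : Type*) [Fintype I] [Fintype J] (a : I) (x : J) : MagicAlgebra I J :=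
  RingQuot.mkAlgHom ℂ (MagicRel I J) (FreeAlgebra.ι ℂ (a, x))

/-- The defining relations of the isomorphism algebra: magic unitary relations together with
`u_{a x} u_{b y} = 0` whenever `rel(a,b) ≠ rel(x,y)`. -/
inductive IsoRel (I J : Type*) [Fintype I] [Fintype J] (rI : I → I → ℕ) (rJ : J → J → ℕ) :
    FreeAlgebra ℂ (I × J) → FreeAlgebra ℂ (I × J) → Prop
  | magic {u v : FreeAlgebra ℂ (I × J)} : MagicRel I J u v → IsoRel I J rI rJ u v
  | mismatch (a b : I) (x y : J) (h : rI a b ≠ rJ x y) :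
      IsoRel I J rI rJ (FreeAlgebra.ι ℂ (a, x) * FreeAlgebra.ι ℂ (b, y)) 0

/-- The generic isomorphism algebra for two relation-valued structures. -/
abbrev IsoAlgebra (I J : Type*) [Fintype I] [Fintype J] (rI : I → I → ℕ)
    (rJ : J → J → ℕ) :=
  RingQuot (IsoRel I J rI rJ)

/-- The generator `u_{a x}` of the isomorphism algebra. -/
def isoGen (I J : Type*) [Fintype I] [Fintype J] (rI : I → I → ℕ) (rJ : J → J → ℕ)
    (a : I) (x : J) : IsoAlgebra I J rI rJ :=
  RingQuot.mkAlgHom ℂ (IsoRel I J rI rJ) (FreeAlgebra.ι ℂ (a, x))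

/-- `rel` as a function on pointed sets. -/
abbrev ptRel {α : Type*} [DecidableEq α] (S : Finset (Finset α)) : PtSet S → PtSet S → ℕ :=
  fun a b => relNum a.val b.val

/-- The isomorphism `∗`-algebra `𝔄•(M,N,S)` associated to the matroid isomorphism game,
presented by magic unitary relations on pointed sets plus the `rel` mismatch relations. -/
abbrev MatIsoAlgebra {α β : Type*} [Fintype α] [Fintype β] [DecidableEq α] [DecidableEq β]
    (S_M : Finset (Finset α)) (S_N : Finset (Finset β)) :=
  IsoAlgebra (PtSet S_M) (PtSet S_N) (ptRel S_M) (ptRel S_N)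

/-- The generator `u_{𝔞 𝔵}` of `𝔄•(M,N,S)`. -/
def matGen {α β : Type*} [Fintype α] [Fintype β] [DecidableEq α] [DecidableEq β]
    (S_M : Finset (Finset α)) (S_N : Finset (Finset β)) (a : PtSet S_M) (x : PtSet S_N) :
    MatIsoAlgebra S_M S_N :=
  isoGen (PtSet S_M) (PtSet S_N) (ptRel S_M) (ptRel S_N) a x

end


open PreMatroid

theorem aux_rk {α : Type*} [DecidableEq α] {M : PreMatroid α} (hM : M.IsMatroid)
    {B : Finset α} (hB : B ∈ M.bases) : M.rk = B.card := by
  obtain ⟨_, hE, hc, _⟩ := hM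
  unfold PreMatroid.rk PreMatroid.rkSet
  apply le_antisymm
  · apply Finset.sup_le
    intro I hI
    obtain ⟨B', hB', hIB⟩ := (Finset.mem_filter.1 hI).2
    rw [hc B hB B' hB']
    exact Finset.card_le_card hIB
  · apply Finset.le_sup (f := Finset.card)
    rw [Finset.mem_filter, Finset.mem_powerset]
    exact ⟨hE B hB, B, hB, subset_rfl⟩

theorem aux_circuit {α : Type*} [DecidableEq α] {M : PreMatroid α} (C : Finset α) :
    C ⊆ M.E → ¬ M.Indep C → ∃ D ⊆ C, M.Circuit D := by
  induction C using Finset.strongInduction with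
  | H C ih =>
    intro hC hd
    by_cases h : ∀ D ⊂ C, M.Indep D
    · exact ⟨C, subset_rfl, hC, hd, h⟩
    · push Not at h
      obtain ⟨D, hD, hDi⟩ := h
      obtain ⟨D', h1, h2⟩ := ih D hD (hD.1.trans hC) hDi
      exact ⟨D', h1.trans hD.1, h2⟩

theorem aux_bases (m r : ℕ) (hr : 1 ≤ r) (B : Finset (Unit ⊕ Fin m)) :
    B ∈ (PreMatroid.directSum (PreMatroid.uniform (Finset.univ : Finset Unit) 1)
          (PreMatroid.uniform (Finset.univ : Finset (Fin m)) (r - 1))).bases ↔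
      Sum.inl () ∈ B ∧ B.card = r := by
  have key : ∀ T : Finset (Fin m),
      ((Finset.univ : Finset Unit).map ⟨Sum.inl, Sum.inl_injective⟩ ∪
        T.map ⟨Sum.inr, Sum.inr_injective⟩ : Finset (Unit ⊕ Fin m)).card = T.card + 1 := by
    intro T
    rw [Finset.card_union_of_disjoint]
    · simp [add_comm]
    · rw [Finset.disjoint_left]
      simp
  simp only [PreMatroid.directSum, PreMatroid.uniform, Finset.mem_image, Finset.mem_product,
    Finset.mem_powersetCard, Prod.exists]
  constructor
  · rintro ⟨S, T, ⟨⟨_, hS⟩, _, hT⟩, rfl⟩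
    have hSu : S = Finset.univ := Finset.eq_univ_of_card S (by simpa using hS)
    subst hSu
    refine ⟨by simp, ?_⟩
    rw [key]; omega
  · rintro ⟨h1, h2⟩
    have hB : ((Finset.univ : Finset Unit).map ⟨Sum.inl, Sum.inl_injective⟩ ∪
        B.toRight.map ⟨Sum.inr, Sum.inr_injective⟩ : Finset (Unit ⊕ Fin m)) = B := by
      ext x
      rcases x with x | x
      · cases x; simp [h1]
      · simp
    refine ⟨Finset.univ, B.toRight, ⟨⟨subset_rfl, by simp⟩, by simp, ?_⟩, hB⟩
    have := key B.toRight
    rw [hB] at this; omega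

theorem stmt0 {α : Type*} [DecidableEq α] (M : PreMatroid α) (r n : ℕ)
    (hM : M.IsMatroid) (hrk : M.rk = r) (hr : 1 ≤ r) (hn : M.E.card = n) :
    (∃ e ∈ M.E, ∀ B ⊆ M.E, B.card = r → e ∈ B → B ∈ M.bases) ↔
      ((∃ (N : PreMatroid α) (e : α), N.IsMatroid ∧ N.Paving ∧ N.rk = r ∧
          M.IsFreeExtension N e) ∨
        M.Iso (PreMatroid.directSum (PreMatroid.uniform (Finset.univ : Finset Unit) 1)
          (PreMatroid.uniform (Finset.univ : Finset (Fin (n - 1))) (r - 1)))) := by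
  have hcard : ∀ B ∈ M.bases, B.card = r := fun B hB => by rw [← hrk, aux_rk hM hB]
  have hM' := hM
  obtain ⟨hne, hE, hc, hex⟩ := hM'
  constructor
  · rintro ⟨e, he, hall⟩
    by_cases hco : ∀ B ∈ M.bases, e ∈ B
    · right
      have hcE : (M.E.erase e).card = n - 1 := by rw [Finset.card_erase_of_mem he, hn]
      let f := Finset.equivFinOfCardEq hcE
      let φ : α → Unit ⊕ Fin (n - 1) := fun x =>
        if h : x ∈ M.E.erase e then Sum.inr (f ⟨x, h⟩) else Sum.inl ()
      have hφe : φ e = Sum.inl () := by simp [φ]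
      have hφ : ∀ x (h : x ∈ M.E.erase e), φ x = Sum.inr (f ⟨x, h⟩) := fun x h => by
        simp only [φ, dif_pos h]
      have hinj : Set.InjOn φ ↑M.E := by
        intro x hx y hy hxy
        by_cases hxe : x = e <;> by_cases hye : y = e
        · rw [hxe, hye]
        · rw [hxe, hφe, hφ y (Finset.mem_erase.2 ⟨hye, hy⟩)] at hxy
          cases hxy
        · rw [hye, hφe, hφ x (Finset.mem_erase.2 ⟨hxe, hx⟩)] at hxy
          cases hxy
        · rw [hφ x (Finset.mem_erase.2 ⟨hxe, hx⟩), hφ y (Finset.mem_erase.2 ⟨hye, hy⟩)] at hxy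
          have := f.injective (Sum.inr.inj hxy)
          exact congrArg Subtype.val this
      refine ⟨φ, ⟨?_, hinj, ?_⟩, ?_⟩
      · intro x _
        rcases h : φ x with y | y <;> simp [PreMatroid.directSum, PreMatroid.uniform]
      · intro y _
        rcases y with y | y
        · exact ⟨e, he, hφe⟩
        · have hy := (f.symm y).2
          refine ⟨f.symm y, Finset.mem_of_mem_erase hy, ?_⟩
          rw [hφ _ hy]; simp
      · intro B hB
        rw [aux_bases _ _ hr, Finset.card_image_of_injOn (hinj.mono (by exact_mod_cast hB))]
        constructor
        · intro h
          exact ⟨Finset.mem_image.2 ⟨e, hco B h, hφe⟩, hcard B h⟩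
        · rintro ⟨h1, h2⟩
          obtain ⟨x, hx, hxe⟩ := Finset.mem_image.1 h1
          have : x = e := hinj (hB hx) he (hxe.trans hφe.symm)
          exact hall B hB h2 (this ▸ hx)
    · left
      push Not at hco
      obtain ⟨B₀, hB₀, heB₀⟩ := hco
      let N : PreMatroid α := ⟨M.E.erase e, M.bases.filter fun B => e ∉ B⟩
      have hNb : ∀ B, B ∈ N.bases ↔ B ∈ M.bases ∧ e ∉ B := fun B => Finset.mem_filter
      have hNM : N.IsMatroid := by
        refine ⟨⟨B₀, (hNb _).2 ⟨hB₀, heB₀⟩⟩, ?_, ?_, ?_⟩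
        · intro B hB x hx
          rw [hNb] at hB
          exact Finset.mem_erase.2 ⟨fun h => hB.2 (h ▸ hx), hE B hB.1 hx⟩
        · intro B₁ h₁ B₂ h₂
          exact hc _ ((hNb _).1 h₁).1 _ ((hNb _).1 h₂).1
        · intro B₁ h₁ B₂ h₂ a ha
          rw [hNb] at h₁ h₂
          obtain ⟨b, hb, hbb⟩ := hex _ h₁.1 _ h₂.1 a ha
          refine ⟨b, hb, (hNb _).2 ⟨hbb, ?_⟩⟩
          rw [Finset.mem_insert, Finset.mem_erase]
          rintro (h | h)
          · exact h₂.2 (h ▸ (Finset.mem_sdiff.1 hb).1)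
          · exact h₁.2 h.2
      have hNrk : N.rk = r := by rw [aux_rk hNM ((hNb _).2 ⟨hB₀, heB₀⟩), hcard _ hB₀]
      have hind : ∀ A ⊆ N.E, A.card = r - 1 → N.Indep A := by
        intro A hA hAc
        have heA : e ∉ A := fun h => (Finset.mem_erase.1 (hA h)).1 rfl
        have hb : insert e A ∈ M.bases := by
          apply hall
          · exact Finset.insert_subset he (hA.trans (Finset.erase_subset _ _))
          · rw [Finset.card_insert_of_notMem heA]; omega
          · exact Finset.mem_insert_self _ _
        obtain ⟨b, hb1, hb2⟩ := hex _ hb _ hB₀ e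
          (Finset.mem_sdiff.2 ⟨Finset.mem_insert_self _ _, heB₀⟩)
        rw [Finset.erase_insert heA] at hb2
        refine ⟨insert b A, (hNb _).2 ⟨hb2, ?_⟩, Finset.subset_insert _ _⟩
        rw [Finset.mem_insert]
        rintro (h | h)
        · exact heB₀ (h ▸ (Finset.mem_sdiff.1 hb1).1)
        · exact heA h
      refine ⟨N, e, hNM, ?_, hNrk, ?_, ?_, ?_⟩
      · intro C hC
        rw [hNrk]
        by_contra hlt
        have hle : r ≤ N.E.card := by
          rw [← hcard _ hB₀]
          exact Finset.card_le_card (hNM.2.1 _ ((hNb _).2 ⟨hB₀, heB₀⟩))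
        obtain ⟨A, hCA, hAE, hAc⟩ := Finset.exists_subsuperset_card_eq (n := r - 1) hC.1
          (by omega) (by omega)
        obtain ⟨B, hB, hAB⟩ := hind A hAE hAc
        exact hC.2.1 ⟨B, hB, hCA.trans hAB⟩
      · exact fun h => (Finset.mem_erase.1 h).1 rfl
      · exact (Finset.insert_erase he).symm
      · intro B
        constructor
        · intro hB
          by_cases heB : e ∈ B
          · right
            have hc1 : (B.erase e).card = r - 1 := by
              rw [Finset.card_erase_of_mem heB, hcard _ hB]
            exact ⟨B.erase e, hind _ (Finset.erase_subset_erase _ (hE _ hB)) hc1,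
              hc1.trans (by rw [hNrk]), (Finset.insert_erase heB).symm⟩
          · exact Or.inl ((hNb _).2 ⟨hB, heB⟩)
        · rintro (h | ⟨A, ⟨B', hB', hAB⟩, hAc, rfl⟩)
          · exact ((hNb _).1 h).1
          · have hA : A ⊆ N.E := hAB.trans (hNM.2.1 _ hB')
            have heA : e ∉ A := fun h => (Finset.mem_erase.1 (hA h)).1 rfl
            apply hall
            · exact Finset.insert_subset he (hA.trans (Finset.erase_subset _ _))
            · rw [Finset.card_insert_of_notMem heA]; omega
            · exact Finset.mem_insert_self _ _
  · rintro (⟨N, e, hNM, hpav, hNrk, heN, hEN, hb⟩ | ⟨φ, hφ, hb⟩)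
    · refine ⟨e, by rw [hEN]; exact Finset.mem_insert_self _ _, ?_⟩
      intro B hB hBc heB
      have hA : B.erase e ⊆ N.E := by
        intro x hx
        obtain ⟨h1, h2⟩ := Finset.mem_erase.1 hx
        have := hB h2
        rw [hEN, Finset.mem_insert] at this
        exact this.resolve_left h1
      have hAc : (B.erase e).card = r - 1 := by rw [Finset.card_erase_of_mem heB, hBc]
      refine (hb B).2 (Or.inr ⟨B.erase e, ?_, by rw [hAc, hNrk], (Finset.insert_erase heB).symm⟩)
      by_contra hd
      obtain ⟨D, hD, hDc⟩ := aux_circuit _ hA hd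
      have h1 := hpav D hDc
      have h2 := Finset.card_le_card hD
      omega
    · obtain ⟨e, he, hee⟩ := hφ.surjOn (show Sum.inl () ∈ _ by
        simp [PreMatroid.directSum, PreMatroid.uniform])
      refine ⟨e, he, fun B hB hBc heB => (hb B hB).2 ?_⟩
      rw [aux_bases _ _ hr, Finset.card_image_of_injOn (hφ.injOn.mono (by exact_mod_cast hB))]
      exact ⟨Finset.mem_image.2 ⟨e, heB, hee⟩, hBc⟩


end MatroidGame
end

section
/- Let M be a matroid of rank 3. Then M is sparse paving if and only if M is simple and every cyclic hyperplane of M has exactly 3 elements. -/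
open scoped BigOperators TensorProduct

namespace MatroidGame

open PreMatroid

theorem le_rk {α : Type*} [DecidableEq α] (M : PreMatroid α) {X I : Finset α}
    (hI : M.Indep I) (hX : I ⊆ X) : I.card ≤ M.rkSet X := by
  unfold rkSet
  exact Finset.le_sup (f := Finset.card) (by simp [hI, hX])

theorem exists_rk {α : Type*} [DecidableEq α] (M : PreMatroid α) (hM : M.IsMatroid)
    (X : Finset α) : ∃ I, M.Indep I ∧ I ⊆ X ∧ I.card = M.rkSet X := by
  obtain ⟨B, hB⟩ := hM.1
  have hne : (X.powerset.filter fun I => M.Indep I).Nonempty :=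
    ⟨∅, by simp only [Finset.mem_filter, Finset.mem_powerset]
           exact ⟨Finset.empty_subset _, B, hB, Finset.empty_subset _⟩⟩
  obtain ⟨I, hI, h⟩ := Finset.exists_mem_eq_sup _ hne Finset.card
  simp only [Finset.mem_filter, Finset.mem_powerset] at hI
  exact ⟨I, hI.2, hI.1, h.symm⟩

theorem card_basis {α : Type*} [DecidableEq α] (M : PreMatroid α) (hM : M.IsMatroid)
    {B : Finset α} (hB : B ∈ M.bases) : B.card = M.rk := by
  obtain ⟨I, ⟨B', hB', hI⟩, _, h⟩ := exists_rk M hM M.E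
  have h1 : B.card ≤ M.rk := le_rk M ⟨B, hB, subset_rfl⟩ (hM.2.1 B hB)
  have h2 := Finset.card_le_card hI
  have h3 := hM.2.2.1 B hB B' hB'
  unfold rk at *
  omega

theorem rk_le {α : Type*} [DecidableEq α] (M : PreMatroid α) (hM : M.IsMatroid)
    (X : Finset α) : M.rkSet X ≤ M.rk := by
  obtain ⟨I, ⟨B', hB', hI⟩, _, h⟩ := exists_rk M hM X
  rw [← h, ← card_basis M hM hB']
  exact Finset.card_le_card hI

theorem exists_basis {α : Type*} [DecidableEq α] (M : PreMatroid α) (hM : M.IsMatroid)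
    {X : Finset α} (h : M.rkSet X = M.rk) : ∃ B ∈ M.bases, B ⊆ X := by
  obtain ⟨I, ⟨B', hB', hI⟩, hX, hc⟩ := exists_rk M hM X
  have := Finset.eq_of_subset_of_card_le hI (by rw [card_basis M hM hB', hc, h])
  exact ⟨B', hB', this ▸ hX⟩

theorem dual_indep {α : Type*} [DecidableEq α] (M : PreMatroid α) (I : Finset α) :
    M.dual.Indep I ↔ ∃ B ∈ M.bases, I ⊆ M.E \ B := by
  simp [Indep, dual]

theorem dual_rk {α : Type*} [DecidableEq α] (M : PreMatroid α) (hM : M.IsMatroid) :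
    M.dual.rk + M.rk = M.E.card := by
  have key : ∀ B ∈ M.bases, (M.E \ B).card + M.rk = M.E.card := by
    intro B hB
    have := Finset.card_sdiff_add_card_eq_card (hM.2.1 B hB)
    rwa [card_basis M hM hB] at this
  obtain ⟨B, hB⟩ := hM.1
  have h1 : (M.E \ B).card ≤ M.dual.rk :=
    le_rk M.dual ((dual_indep M _).2 ⟨B, hB, subset_rfl⟩) Finset.sdiff_subset
  have h2 : M.dual.rk ≤ (M.E \ B).card := by
    unfold rk rkSet
    refine Finset.sup_le ?_
    intro I hI
    obtain ⟨B', hB', hI'⟩ := (dual_indep M I).1 (Finset.mem_filter.1 hI).2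
    have := Finset.card_le_card hI'
    have := key B hB
    have := key B' hB'
    omega
  have := key B hB
  omega

theorem indep_mono {α : Type*} [DecidableEq α] (M : PreMatroid α) {I J : Finset α}
    (hJ : M.Indep J) (h : I ⊆ J) : M.Indep I := by
  obtain ⟨B, hB, hJ⟩ := hJ
  exact ⟨B, hB, h.trans hJ⟩

theorem indep_empty {α : Type*} [DecidableEq α] (M : PreMatroid α) (hM : M.IsMatroid) :
    M.Indep ∅ := by
  obtain ⟨B, hB⟩ := hM.1
  exact ⟨B, hB, Finset.empty_subset _⟩

/-- In a simple matroid all subsets of size at most two are independent. -/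
theorem simple_indep {α : Type*} [DecidableEq α] (M : PreMatroid α) (hM : M.IsMatroid)
    (hs : M.Simple) {I : Finset α} (hE : I ⊆ M.E) (hc : I.card ≤ 2) : M.Indep I := by
  by_contra hI
  obtain ⟨J, hJ, hJI, hJc⟩ := exists_rk M hM I
  have hne : I.Nonempty := by
    rw [Finset.nonempty_iff_ne_empty]
    rintro rfl
    exact hI (indep_empty M hM)
  obtain ⟨x, hx⟩ := hne
  have hxi : M.Indep {x} := by
    by_contra h
    refine hs.1 x ⟨hE hx, fun B hB hxB => h ⟨B, hB, by simpa using hxB⟩⟩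
  have h1 := le_rk M hxi (X := I) (by simpa using hx)
  have hlt : J.card < I.card := by
    apply Finset.card_lt_card
    refine hJI.ssubset_of_ne ?_
    rintro rfl
    exact hI hJ
  rw [Finset.card_singleton] at h1
  have := hs.2 I hE (by omega)
  omega

theorem paving_iff_simple {α : Type*} [DecidableEq α] (M : PreMatroid α) (hM : M.IsMatroid)
    (h3 : M.rk = 3) : M.Paving ↔ M.Simple := by
  constructor
  · intro hp
    have hl : M.Loopless := by
      rintro a ⟨ha, hB⟩
      have := hp {a} ⟨by simpa using ha, ?_, ?_⟩
      · simp [h3] at this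
      · rintro ⟨B, hB', h⟩
        exact hB B hB' (by simpa using h)
      · intro D hD
        rw [Finset.ssubset_singleton_iff] at hD
        exact hD ▸ indep_empty M hM
    refine ⟨hl, fun X hX h1 => ?_⟩
    obtain ⟨J, hJ, hJI, hJc⟩ := exists_rk M hM X
    have h0 := Finset.card_le_card hJI
    by_contra hne
    obtain ⟨x, hx, y, hy, hxy⟩ := Finset.one_lt_card.1 (show 1 < X.card by omega)
    have hsub : ({x, y} : Finset α) ⊆ X := by
      intro z hz
      simp only [Finset.mem_insert, Finset.mem_singleton] at hz
      rcases hz with rfl | rfl <;> assumption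
    have := hp {x, y} ⟨hsub.trans hX, ?_, ?_⟩
    · rw [Finset.card_pair hxy] at this
      omega
    · intro h
      have := le_rk M h hsub
      rw [Finset.card_pair hxy] at this
      omega
    · intro D hD
      have hDc := Finset.card_lt_card hD
      rw [Finset.card_pair hxy] at hDc
      rcases Nat.lt_or_ge D.card 1 with h | h
      · have : D = ∅ := Finset.card_eq_zero.1 (by omega)
        exact this ▸ indep_empty M hM
      · obtain ⟨z, rfl⟩ := Finset.card_eq_one.1 (show D.card = 1 by omega)
        by_contra hz
        refine hl z ⟨hX (hsub (hD.1 (by simp))), fun B hB hzB => hz ⟨B, hB, by simpa using hzB⟩⟩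
  · intro hs C hC
    by_contra hlt
    exact hC.2.1 (simple_indep M hM hs hC.1 (by omega))

theorem hyperplane_cocircuit {α : Type*} [DecidableEq α] (M : PreMatroid α) (hM : M.IsMatroid)
    (h3 : M.rk = 3) {H : Finset α} (hH : M.IsHyperplane H) : M.dual.Circuit (M.E \ H) := by
  obtain ⟨⟨hHE, hcl⟩, hr⟩ := hH
  refine ⟨Finset.sdiff_subset, ?_, ?_⟩
  · rw [dual_indep]
    rintro ⟨B, hB, h⟩
    have hBH : B ⊆ H := by
      intro x hx
      by_contra hxH
      have := h (Finset.mem_sdiff.2 ⟨hM.2.1 B hB hx, hxH⟩)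
      exact (Finset.mem_sdiff.1 this).2 hx
    have := le_rk M ⟨B, hB, subset_rfl⟩ hBH
    rw [card_basis M hM hB] at this
    omega
  · intro D hD
    obtain ⟨x, hx, hxD⟩ := Finset.exists_of_ssubset hD
    have hx' := Finset.mem_sdiff.1 hx
    have hne : M.rkSet (insert x H) ≠ M.rkSet H := by
      intro h
      apply hx'.2
      rw [← hcl]
      exact Finset.mem_filter.2 ⟨hx'.1, h⟩
    obtain ⟨J, hJ, hJH, hJc⟩ := exists_rk M hM H
    have h1 := le_rk M hJ (hJH.trans (Finset.subset_insert x H))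
    have h2 := rk_le M hM (insert x H)
    obtain ⟨B, hB, hBH⟩ := exists_basis M hM (X := insert x H) (by omega)
    rw [dual_indep]
    refine ⟨B, hB, fun y hy => ?_⟩
    have hy' := Finset.mem_sdiff.1 (hD.1 hy)
    refine Finset.mem_sdiff.2 ⟨hy'.1, fun hyB => ?_⟩
    rcases Finset.mem_insert.1 (hBH hyB) with rfl | h
    · exact hxD hy
    · exact hy'.2 h

theorem cocircuit_hyperplane {α : Type*} [DecidableEq α] (M : PreMatroid α) (hM : M.IsMatroid)
    (h3 : M.rk = 3) {C : Finset α} (hC : M.dual.Circuit C) : M.IsHyperplane (M.E \ C) := by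
  obtain ⟨hCE, hd, hm⟩ := hC
  change C ⊆ M.E at hCE
  have hlt : M.rkSet (M.E \ C) < 3 := by
    by_contra hge
    have := rk_le M hM (M.E \ C)
    obtain ⟨B, hB, hBH⟩ := exists_basis M hM (X := M.E \ C) (by omega)
    refine hd ((dual_indep M C).2 ⟨B, hB, fun y hy => ?_⟩)
    exact Finset.mem_sdiff.2 ⟨hCE hy, fun h => (Finset.mem_sdiff.1 (hBH h)).2 hy⟩
  have hins : ∀ x ∈ C, ∃ B ∈ M.bases, B ⊆ insert x (M.E \ C) := by
    intro x hx
    obtain ⟨B, hB, h⟩ := (dual_indep M _).1 (hm _ (Finset.erase_ssubset hx))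
    refine ⟨B, hB, fun y hy => ?_⟩
    rw [Finset.mem_insert, Finset.mem_sdiff]
    by_cases hyx : y = x
    · exact Or.inl hyx
    · refine Or.inr ⟨hM.2.1 B hB hy, fun hyC => ?_⟩
      exact (Finset.mem_sdiff.1 (h (Finset.mem_erase.2 ⟨hyx, hyC⟩))).2 hy
  have hne : C.Nonempty := by
    rw [Finset.nonempty_iff_ne_empty]
    rintro rfl
    obtain ⟨B, hB⟩ := hM.1
    exact hd ((dual_indep M _).2 ⟨B, hB, Finset.empty_subset _⟩)
  have hr : M.rkSet (M.E \ C) = 2 := by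
    obtain ⟨x, hx⟩ := hne
    obtain ⟨B, hB, hBx⟩ := hins x hx
    have h1 := le_rk M (I := B.erase x) (X := M.E \ C) ⟨B, hB, Finset.erase_subset _ _⟩
      (Finset.subset_insert_iff.1 hBx)
    have h2 := Finset.pred_card_le_card_erase (s := B) (a := x)
    rw [card_basis M hM hB] at h2
    omega
  refine ⟨⟨Finset.sdiff_subset, ?_⟩, by omega⟩
  ext x
  unfold cl
  rw [Finset.mem_filter, Finset.mem_sdiff]
  constructor
  · rintro ⟨hxE, h⟩
    refine ⟨hxE, fun hxC => ?_⟩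
    obtain ⟨B, hB, hBx⟩ := hins x hxC
    have h1 := le_rk M ⟨B, hB, subset_rfl⟩ hBx
    rw [card_basis M hM hB] at h1
    omega
  · rintro ⟨hxE, h⟩
    refine ⟨hxE, ?_⟩
    rw [Finset.insert_eq_of_mem (Finset.mem_sdiff.2 ⟨hxE, h⟩)]

theorem stmt4 {α : Type*} [DecidableEq α] (M : PreMatroid α) (hM : M.IsMatroid)
    (h3 : M.rk = 3) :
    M.SparsePaving ↔ (M.Simple ∧ ∀ H, M.IsCyclicHyperplane H → H.card = 3) := by
  unfold SparsePaving
  rw [paving_iff_simple M hM h3]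
  refine and_congr_right fun hs => ?_
  have hd := dual_rk M hM
  constructor
  · intro hp H hH
    have h1 := hp _ (hyperplane_cocircuit M hM h3 hH.1)
    have h2 := Finset.card_sdiff_add_card_eq_card hH.1.1.1
    obtain ⟨J, hJ, hJH, hJc⟩ := exists_rk M hM H
    have hr := hH.1.2
    have hJne : J.Nonempty := Finset.card_pos.1 (by omega)
    obtain ⟨x, hx⟩ := hJne
    obtain ⟨C, hC, hCH, _⟩ := hH.2 x (hJH hx)
    have h4 := (paving_iff_simple M hM h3).2 hs C hC
    have h5 := Finset.card_le_card hCH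
    omega
  · intro hcyc C hC
    have hH := cocircuit_hyperplane M hM h3 hC
    have hCE : C ⊆ M.E := hC.1
    have h2 := Finset.card_sdiff_add_card_eq_card hCE
    by_contra hlt
    have hcard : 3 < (M.E \ C).card := by omega
    have := hcyc _ ⟨hH, fun x hx => ?_⟩
    · omega
    · obtain ⟨T, hxT, hT, hTc⟩ := Finset.exists_subsuperset_card_eq (n := 3)
        (Finset.singleton_subset_iff.2 hx) (by simp) (by omega)
      have hTE : T ⊆ M.E := hT.trans Finset.sdiff_subset
      refine ⟨T, ⟨hTE, fun hi => ?_, fun D hD => ?_⟩, hT, hxT (by simp)⟩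
      · have h6 := le_rk M hi hT
        have := hH.2
        omega
      · have := Finset.card_lt_card hD
        exact simple_indep M hM hs (hD.1.trans hTE) (by omega)

end MatroidGame
end

section
/- Let M be a rank 3 sparse paving matroid on finite ground set E, and for each cyclic hyperplane H of M fix a sign s_H ∈ {+1,−1}. Let NB' be the collection of 3-element subsets {(a,t_a),(b,t_b),(c,t_c)} of E × {+1,−1} such that {a,b,c} is a cyclic hyperplane H of M and t_a·t_b·t_c = s_H. Then there exists a matroid of rank 3 on the ground set E × {+1,−1} whose bases are exactly the 3-element subsets of E × {+1,−1} not belonging to NB'; equivalently, this collection of 3-element subsets satisfies the basis exchange axiom. -/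
open scoped BigOperators TensorProduct

namespace MatroidGame

open PreMatroid

def bsgn (b : Bool) : ℤ := if b then 1 else -1

/-- The nonbases `NB'` of the lifted matroid `M_S`. -/
def liftNonbasis {α : Type*} [DecidableEq α] (M : PreMatroid α) (s : Finset α → ℤ)
    (B : Finset (α × Bool)) : Prop :=
  (B.image Prod.fst).card = B.card ∧ M.IsCyclicHyperplane (B.image Prod.fst) ∧
    (∏ x ∈ B, bsgn x.2) = s (B.image Prod.fst)

/-- The candidate matroid `M_S` on `E × {±1}`: bases are the 3-element subsets not in `NB'`. -/
noncomputable def lift {α : Type*} [DecidableEq α] (M : PreMatroid α) (s : Finset α → ℤ) :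
    PreMatroid (α × Bool) := by
  classical
  exact ⟨M.E ×ˢ (Finset.univ : Finset Bool),
    ((M.E ×ˢ (Finset.univ : Finset Bool)).powersetCard 3).filter
      fun B => ¬ liftNonbasis M s B⟩

theorem rkSet_le_three {α : Type*} [DecidableEq α] (M : PreMatroid α)
    (hc : ∀ B ∈ M.bases, B.card = 3) (X : Finset α) : M.rkSet X ≤ 3 := by
  unfold PreMatroid.rkSet
  refine Finset.sup_le ?_
  intro I hI
  obtain ⟨B, hB, hIB⟩ := (Finset.mem_filter.1 hI).2
  exact (hc B hB) ▸ Finset.card_le_card hIB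

theorem card_le_rkSet {α : Type*} [DecidableEq α] (M : PreMatroid α)
    {I X : Finset α} (hI : M.Indep I) (h : I ⊆ X) : I.card ≤ M.rkSet X := by
  unfold PreMatroid.rkSet
  exact Finset.le_sup (f := Finset.card)
    (Finset.mem_filter.2 ⟨Finset.mem_powerset.2 h, hI⟩)

theorem indep_of_basis {α : Type*} [DecidableEq α] (M : PreMatroid α)
    {B : Finset α} (hB : B ∈ M.bases) : M.Indep B := ⟨B, hB, Finset.Subset.refl _⟩

theorem exists_indep_of_le_rkSet {α : Type*} [DecidableEq α] (M : PreMatroid α)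
    {X : Finset α} {k : ℕ} (hk : 0 < k) (h : k ≤ M.rkSet X) :
    ∃ I, I ⊆ X ∧ M.Indep I ∧ k ≤ I.card := by
  unfold PreMatroid.rkSet at h
  obtain ⟨I, hI, hle⟩ := (Finset.le_sup_iff (by simpa using hk)).1 h
  rw [Finset.mem_filter, Finset.mem_powerset] at hI
  exact ⟨I, hI.1, hI.2, hle⟩

theorem bases_card {α : Type*} [DecidableEq α] (M : PreMatroid α) (hM : M.IsMatroid)
    (h3 : M.rk = 3) : ∀ B ∈ M.bases, B.card = 3 := by
  intro B hB
  obtain ⟨I, hIE, ⟨B', hB', hIB'⟩, hI⟩ :=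
    exists_indep_of_le_rkSet M (X := M.E) (k := 3) (by norm_num) (by rw [← h3]; rfl)
  have h1 := Finset.card_le_card hIB'
  have h2 := hM.2.2.1 B hB B' hB'
  have h4 := card_le_rkSet M (indep_of_basis M hB) (hM.2.1 B hB)
  have h5 : M.rkSet M.E = 3 := h3
  omega

theorem exists_basis_subset {α : Type*} [DecidableEq α] (M : PreMatroid α)
    (hc : ∀ B ∈ M.bases, B.card = 3) {X : Finset α} (h : 3 ≤ M.rkSet X) :
    ∃ B ∈ M.bases, B ⊆ X := by
  obtain ⟨I, hIX, ⟨B, hB, hIB⟩, hI⟩ := exists_indep_of_le_rkSet M (k := 3) (by norm_num) h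
  have : I = B := Finset.eq_of_subset_of_card_le hIB (by rw [hc B hB]; exact hI)
  exact ⟨B, hB, this ▸ hIX⟩

theorem exists_circuit {α : Type*} [DecidableEq α] (M : PreMatroid α) (X : Finset α) :
    X ⊆ M.E → ¬ M.Indep X → ∃ C, M.Circuit C ∧ C ⊆ X := by
  induction X using Finset.strongInduction with
  | H X ih =>
    intro hX hn
    by_cases h : ∀ D ⊂ X, M.Indep D
    · exact ⟨X, ⟨hX, hn, h⟩, Finset.Subset.refl _⟩
    · push Not at h
      obtain ⟨D, hD, hDn⟩ := h
      obtain ⟨C, hC, hCD⟩ := ih D hD (hD.1.trans hX) hDn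
      exact ⟨C, hC, hCD.trans hD.1⟩

theorem no_pencil_basis {α : Type*} [DecidableEq α] (M : PreMatroid α) (hM : M.IsMatroid)
    (hc : ∀ B ∈ M.bases, B.card = 3) {p q r t : α} (hpq : p ≠ q)
    (hi : M.Indep {p, q}) (h1 : ({p, q, r} : Finset α) ∉ M.bases)
    (h2 : ({p, q, t} : Finset α) ∉ M.bases) : ({p, r, t} : Finset α) ∉ M.bases := by
  intro hB
  obtain ⟨B2, hB2, hsub⟩ := hi
  have hp : p ∈ B2 := hsub (by simp)
  have hq : q ∈ B2 := hsub (by simp)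
  have hcard := hc B2 hB2
  have : (B2 \ {p, q}).card = 1 := by
    rw [Finset.card_sdiff_of_subset hsub, hcard, Finset.card_pair hpq]
  obtain ⟨u, hu⟩ := Finset.card_eq_one.1 this
  have hu' : u ∈ B2 \ {p, q} := by rw [hu]; simp
  simp only [Finset.mem_sdiff, Finset.mem_insert, Finset.mem_singleton, not_or] at hu'
  obtain ⟨huB, hup, huq⟩ := hu'
  have hB2eq : B2 = {p, q, u} := by
    ext x
    have := Finset.ext_iff.1 hu x
    simp only [Finset.mem_sdiff, Finset.mem_insert, Finset.mem_singleton] at this ⊢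
    grind
  have hu2 : u ∈ B2 \ ({p, r, t} : Finset α) := by
    simp only [Finset.mem_sdiff, Finset.mem_insert, Finset.mem_singleton, not_or]
    refine ⟨huB, hup, ?_, ?_⟩
    · rintro rfl; exact h1 (hB2eq ▸ hB2)
    · rintro rfl; exact h2 (hB2eq ▸ hB2)
  obtain ⟨b, hb, hnew⟩ := hM.2.2.2 B2 hB2 _ hB u hu2
  have herase : B2.erase u = {p, q} := by
    rw [hB2eq]; ext x; simp only [Finset.mem_erase, Finset.mem_insert, Finset.mem_singleton]
    grind
  have hins : insert b ({p, q} : Finset α) = {p, q, b} := by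
    ext x; simp only [Finset.mem_insert, Finset.mem_singleton]; tauto
  rw [herase, hins] at hnew
  simp only [Finset.mem_sdiff, Finset.mem_insert, Finset.mem_singleton] at hb
  obtain ⟨rfl | rfl | rfl, hb2⟩ := hb
  · exact hb2 hp
  · exact h1 hnew
  · exact h2 hnew

theorem hyperplane_unique {α : Type*} [DecidableEq α] (M : PreMatroid α) (hM : M.IsMatroid)
    (h3 : M.rk = 3) (hp : M.Paving) {p q r t : α} (hpq : p ≠ q)
    (h1 : M.IsHyperplane {p, q, r}) (h2 : M.IsHyperplane {p, q, t}) :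
    t ∈ ({p, q, r} : Finset α) := by
  have hc := bases_card M hM h3
  by_contra ht
  have hsub1 := h1.1.1
  have hsub2 := h2.1.1
  have hi : M.Indep {p, q} := by
    by_contra hn
    have hs : ({p, q} : Finset α) ⊆ M.E := fun x hx => hsub1 (by
      simp only [Finset.mem_insert, Finset.mem_singleton] at hx ⊢; tauto)
    obtain ⟨C, hC, hCs⟩ := exists_circuit M _ hs hn
    have := Finset.card_le_card hCs
    rw [Finset.card_pair hpq] at this
    have := hp C hC
    omega
  have hnb : ∀ X : Finset α, M.IsHyperplane X → X ∉ M.bases := by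
    intro X hX hXB
    have := card_le_rkSet M (indep_of_basis M hXB) (Finset.Subset.refl X)
    have := hc X hXB
    have := hX.2
    omega
  have hn1 := hnb _ h1
  have hn2 := hnb _ h2
  have htE : t ∈ M.E := hsub2 (by simp)
  have hr2 : M.rkSet {p, q, r} = 2 := by rw [h1.2, h3]
  have hne : M.rkSet (insert t {p, q, r}) ≠ 2 := by
    intro h
    apply ht
    rw [← h1.1.2]
    unfold PreMatroid.cl
    rw [Finset.mem_filter]
    exact ⟨htE, by rw [h, hr2]⟩
  have hge : 2 ≤ M.rkSet (insert t {p, q, r}) := by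
    have := card_le_rkSet M hi (X := insert t {p, q, r}) (by
      intro x hx; simp only [Finset.mem_insert, Finset.mem_singleton] at hx ⊢; tauto)
    rwa [Finset.card_pair hpq] at this
  have hge3 : 3 ≤ M.rkSet (insert t {p, q, r}) := by omega
  obtain ⟨B, hB, hBs⟩ := exists_basis_subset M hc hge3
  have hBc := hc B hB
  have key : ∀ {x y z : α}, B ⊆ {x, y, z} → ({x, y, z} : Finset α) ∈ M.bases := by
    intro x y z h
    have := Finset.eq_of_subset_of_card_le h (by rw [hBc]; exact Finset.card_le_three)
    exact this ▸ hB
  have hp' := no_pencil_basis M hM hc hpq hi hn1 hn2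
  have hq' := no_pencil_basis M hM hc (p := q) (q := p) (r := r) (t := t) hpq.symm
    (by rwa [Finset.pair_comm]) (by rwa [Finset.insert_comm]) (by rwa [Finset.insert_comm])
  have mB : ∀ x ∈ B, x = t ∨ x = p ∨ x = q ∨ x = r := by
    intro x hx; simpa using hBs hx
  by_cases a1 : p ∈ B
  · by_cases a2 : q ∈ B
    · by_cases a3 : r ∈ B
      · by_cases a4 : t ∈ B
        · have hs : ({p, q, r} : Finset α) ⊆ B := by
            intro x hx; simp only [Finset.mem_insert, Finset.mem_singleton] at hx
            rcases hx with rfl | rfl | rfl <;> assumption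
          have h5 := card_le_rkSet M (X := {p, q, r}) ⟨B, hB, hs⟩ (Finset.Subset.refl _)
          have h6 : ({p, q} : Finset α) = {p, q, r} :=
            Finset.eq_of_subset_of_card_le (by
              intro x hx; simp only [Finset.mem_insert, Finset.mem_singleton] at hx ⊢
              exact hx.elim Or.inl fun h => Or.inr (Or.inl h))
              (by rw [Finset.card_pair hpq]; omega)
          have h7 : r ∈ ({p, q} : Finset α) := by rw [h6]; simp
          simp only [Finset.mem_insert, Finset.mem_singleton] at h7
          exact hn2 (key (by
            intro x hx; have := mB x hx; simp only [Finset.mem_insert, Finset.mem_singleton]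
            clear * - this h7
            rcases h7 with rfl | rfl <;> tauto))
        · exact hn1 (key (by intro x hx; have := mB x hx; simp only [Finset.mem_insert, Finset.mem_singleton]; grind only))
      · exact hn2 (key (by intro x hx; have := mB x hx; simp only [Finset.mem_insert, Finset.mem_singleton]; grind only))
    · exact hp' (key (by intro x hx; have := mB x hx; simp only [Finset.mem_insert, Finset.mem_singleton]; grind only))
  · exact hq' (key (by intro x hx; have := mB x hx; simp only [Finset.mem_insert, Finset.mem_singleton]; grind only))

theorem bsgn_inj {a b : Bool} (h : bsgn a = bsgn b) : a = b := by
  revert h; cases a <;> cases b <;> simp [bsgn]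

theorem bsgn_ne {a : Bool} : bsgn a ≠ 0 := by
  cases a <;> simp [bsgn]

theorem lift_unique {α : Type*} [DecidableEq α] (M : PreMatroid α) (hM : M.IsMatroid)
    (h3 : M.rk = 3) (hp : M.Paving) (s : Finset α → ℤ) {D : Finset (α × Bool)}
    {b c : α × Bool} (hD : D.card = 2) (hb : b ∉ D) (hc : c ∉ D)
    (h1 : liftNonbasis M s (insert b D)) (h2 : liftNonbasis M s (insert c D)) : b = c := by
  obtain ⟨x, y, hxy, rfl⟩ := Finset.card_eq_two.1 hD
  obtain ⟨c1, ⟨H1, -⟩, s1⟩ := h1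
  obtain ⟨c2, ⟨H2, -⟩, s2⟩ := h2
  rw [Finset.card_insert_of_notMem hb, hD] at c1
  rw [Finset.card_insert_of_notMem hc, hD] at c2
  rw [Finset.prod_insert hb] at s1
  rw [Finset.prod_insert hc] at s2
  simp only [Finset.image_insert, Finset.image_singleton] at *
  have e : ∀ z : α, ({z, x.1, y.1} : Finset α) = {x.1, y.1, z} := by
    intro z; ext w; simp only [Finset.mem_insert, Finset.mem_singleton]; tauto
  have hx : x.1 ≠ y.1 := by
    intro h; rw [h] at c1
    simp only [Finset.mem_singleton, Finset.insert_eq_of_mem] at c1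
    have := Finset.card_le_two (a := b.1) (b := y.1)
    omega
  have hcx : c.1 ∉ ({x.1, y.1} : Finset α) := by
    intro h; rw [Finset.insert_eq_of_mem h] at c2
    have := Finset.card_le_two (a := x.1) (b := y.1)
    omega
  rw [e] at H1 H2
  have hm := hyperplane_unique M hM h3 hp hx H1 H2
  simp only [Finset.mem_insert, Finset.mem_singleton, not_or] at hm hcx
  have hbc : c.1 = b.1 := by tauto
  rw [hbc, ← s1] at s2
  have hP : (∏ z ∈ ({x, y} : Finset (α × Bool)), bsgn z.2) ≠ 0 :=
    Finset.prod_ne_zero_iff.2 fun _ _ => bsgn_ne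
  exact Prod.ext hbc.symm (bsgn_inj (mul_right_cancel₀ hP s2)).symm

theorem mem_lift_bases {α : Type*} [DecidableEq α] (M : PreMatroid α) (s : Finset α → ℤ)
    (B : Finset (α × Bool)) : B ∈ (lift M s).bases ↔
      (B ⊆ M.E ×ˢ (Finset.univ : Finset Bool) ∧ B.card = 3) ∧ ¬ liftNonbasis M s B := by
  simp only [lift, Finset.mem_filter, Finset.mem_powersetCard]

theorem stmt5 {α : Type*} [DecidableEq α] (M : PreMatroid α) (hM : M.IsMatroid)
    (h3 : M.rk = 3) (hsp : M.SparsePaving) (s : Finset α → ℤ)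
    (hs : ∀ H, M.IsCyclicHyperplane H → s H = 1 ∨ s H = -1) :
    (lift M s).IsMatroid ∧ (lift M s).rk = 3 := by
  have hc := bases_card M hM h3
  have hlc : ∀ B ∈ (lift M s).bases, B.card = 3 := fun B hB =>
    ((mem_lift_bases M s B).1 hB).1.2
  have hle : ∀ B ∈ (lift M s).bases, B ⊆ (lift M s).E := fun B hB =>
    ((mem_lift_bases M s B).1 hB).1.1
  have hne : (lift M s).bases.Nonempty := by
    obtain ⟨B0, hB0⟩ := hM.1
    refine ⟨B0 ×ˢ {true}, (mem_lift_bases M s _).2 ⟨⟨?_, ?_⟩, ?_⟩⟩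
    · exact Finset.product_subset_product (hM.2.1 B0 hB0) (Finset.subset_univ _)
    · simp [hc B0 hB0]
    · rintro ⟨-, ⟨⟨-, hr⟩, -⟩, -⟩
      have himg : (B0 ×ˢ ({true} : Finset Bool)).image Prod.fst = B0 := by
        ext x; simp
      rw [himg, h3] at hr
      have := card_le_rkSet M (indep_of_basis M hB0) (Finset.Subset.refl B0)
      have := hc B0 hB0
      omega
  refine ⟨⟨hne, hle, ?_, ?_⟩, ?_⟩
  · intro B₁ h₁ B₂ h₂
    rw [hlc _ h₁, hlc _ h₂]
  · intro B₁ h₁ B₂ h₂ a ha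
    have haB := (Finset.mem_sdiff.1 ha).1
    have hD : (B₁.erase a).card = 2 := by
      rw [Finset.card_erase_of_mem haB, hlc _ h₁]
    have hcard : (B₂ \ B₁).card = (B₁ \ B₂).card :=
      Finset.card_sdiff_comm (by rw [hlc _ h₁, hlc _ h₂])
    have hpos : 0 < (B₁ \ B₂).card := Finset.card_pos.2 ⟨a, ha⟩
    have hnotin : ∀ b ∈ B₂ \ B₁, b ∉ B₁.erase a := fun b hb h =>
      (Finset.mem_sdiff.1 hb).2 (Finset.mem_of_mem_erase h)
    have hbase : ∀ b ∈ B₂ \ B₁, insert b (B₁.erase a) ∉ (lift M s).bases →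
        liftNonbasis M s (insert b (B₁.erase a)) := by
      intro b hb hn
      by_contra hl
      refine hn ((mem_lift_bases M s _).2 ⟨⟨?_, ?_⟩, hl⟩)
      · exact Finset.insert_subset (hle _ h₂ (Finset.mem_sdiff.1 hb).1)
          ((Finset.erase_subset _ _).trans (hle _ h₁))
      · rw [Finset.card_insert_of_notMem (hnotin b hb), hD]
    by_contra hcon
    push Not at hcon
    obtain ⟨b, hb⟩ : (B₂ \ B₁).Nonempty := Finset.card_pos.1 (by omega)
    have huniq : B₂ \ B₁ = {b} := by
      refine Finset.eq_singleton_iff_unique_mem.2 ⟨hb, fun c hc' => ?_⟩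
      exact lift_unique M hM h3 hsp.1 s hD (hnotin c hc') (hnotin b hb)
        (hbase c hc' (hcon c hc')) (hbase b hb (hcon b hb))
    have h1 : (B₁ \ B₂).card = 1 := by rw [← hcard, huniq, Finset.card_singleton]
    have heq : insert b (B₁.erase a) = B₂ := by
      symm
      refine Finset.eq_of_subset_of_card_le ?_ ?_
      · intro x hx
        by_cases hx1 : x ∈ B₁
        · refine Finset.mem_insert_of_mem (Finset.mem_erase.2 ⟨?_, hx1⟩)
          rintro rfl
          exact (Finset.mem_sdiff.1 ha).2 hx
        · have : x ∈ B₂ \ B₁ := Finset.mem_sdiff.2 ⟨hx, hx1⟩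
          rw [huniq, Finset.mem_singleton] at this
          rw [this]; exact Finset.mem_insert_self _ _
      · rw [Finset.card_insert_of_notMem (hnotin b hb), hD, hlc _ h₂]
    exact hcon b hb (heq ▸ h₂)
  · obtain ⟨B, hB⟩ := hne
    have h1 := card_le_rkSet (lift M s) (indep_of_basis _ hB) (hle B hB)
    rw [hlc B hB] at h1
    exact le_antisymm (rkSet_le_three (lift M s) hlc _) h1

end MatroidGame
end

section
/- The matroids P and Q are not isomorphic: there is no bijection φ of E = {1,…,9} × {+1,−1} to itself such that B is a basis of P if and only if φ(B) is a basis of Q. -/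
open scoped BigOperators TensorProduct

namespace MatroidGame

open PreMatroid

/-- The rows and columns of the 3×3 grid (0-indexed). -/
def rowcol : Finset (Finset (Fin 9)) :=
  {{0, 1, 2}, {3, 4, 5}, {6, 7, 8}, {0, 3, 6}, {1, 4, 7}, {2, 5, 8}}

/-- The matroid `P = M_hom` on `{1,…,9} × {±1}`. -/
def matP : PreMatroid (Fin 9 × Bool) :=
  ⟨Finset.univ,
    ((Finset.univ : Finset (Fin 9 × Bool)).powersetCard 3).filter fun B =>
      ¬ (B.image Prod.fst ∈ rowcol ∧ (∏ x ∈ B, bsgn x.2) = 1)⟩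

/-- The matroid `Q = M_S` on `{1,…,9} × {±1}`, where the row `{7,8,9}` gets sign `-1`. -/
def matQ : PreMatroid (Fin 9 × Bool) :=
  ⟨Finset.univ,
    ((Finset.univ : Finset (Fin 9 × Bool)).powersetCard 3).filter fun B =>
      ¬ ((B.image Prod.fst ∈ rowcol ∧ B.image Prod.fst ≠ {6, 7, 8} ∧
            (∏ x ∈ B, bsgn x.2) = 1) ∨
          (B.image Prod.fst = {6, 7, 8} ∧ (∏ x ∈ B, bsgn x.2) = -1))⟩

/-- Numerical code of a point: `2 * position + sign`. -/
def enc (x : Fin 9 × Bool) : ℕ := 2 * x.1.val + (if x.2 then 0 else 1)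

/-- Code of the third point on the line of `Q` through two points (`99` if there is none). -/
def thirdQ (m n : ℕ) : ℕ :=
  let i := m / 2
  let j := n / 2
  bif Nat.beq i j then 99 else
  bif Nat.beq (i / 3) (j / 3) then
    2 * (3 * (i / 3) + (3 - (i % 3 + j % 3))) + (m + n + (i / 3) / 2) % 2
  else bif Nat.beq (i % 3) (j % 3) then
    2 * (3 * (3 - (i / 3 + j / 3)) + i % 3) + (m + n) % 2
  else 99

/-- A triple of distinct points that is a nonbasis of `Q`. -/
def badQ (a b c : Fin 9 × Bool) : Prop :=
  (({a.1, b.1, c.1} : Finset (Fin 9)) ∈ rowcol ∧ ({a.1, b.1, c.1} : Finset (Fin 9)) ≠ {6, 7, 8} ∧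
      bsgn a.2 * (bsgn b.2 * bsgn c.2) = 1) ∨
    (({a.1, b.1, c.1} : Finset (Fin 9)) = {6, 7, 8} ∧ bsgn a.2 * (bsgn b.2 * bsgn c.2) = -1)

instance (a b c : Fin 9 × Bool) : Decidable (badQ a b c) := by
  unfold badQ; infer_instance

set_option maxRecDepth 100000 in
lemma badQ_third : ∀ a b c : Fin 9 × Bool, badQ a b c → thirdQ (enc a) (enc b) = enc c := by
  decide +kernel

lemma enc_lt (a : Fin 9 × Bool) : enc a < 18 := by
  obtain ⟨i, s⟩ := a
  cases s <;> simp [enc] <;> omega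

lemma enc_inj {a b : Fin 9 × Bool} (h : enc a = enc b) : a = b := by
  obtain ⟨i, s⟩ := a
  obtain ⟨j, t⟩ := b
  cases s <;> cases t <;> simp [enc] at h ⊢ <;> omega

/-- The points with codes `a, b, c, d` do not span a `3 × 3` grid of distinct points. -/
def NoGrid (a b c d : ℕ) : Prop :=
  thirdQ b d < 18 → thirdQ c d < 18 →
    thirdQ (thirdQ a b) (thirdQ c d) = thirdQ (thirdQ a c) (thirdQ b d) →
    thirdQ (thirdQ a b) (thirdQ c d) < 18 →
    ¬ [a, b, thirdQ a b, c, d, thirdQ c d, thirdQ a c, thirdQ b d,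
      thirdQ (thirdQ a b) (thirdQ c d)].Nodup

instance (a b c d : ℕ) : Decidable (NoGrid a b c d) := by
  unfold NoGrid; infer_instance

/-- `NoGrid` for all choices of the last point. -/
def NoGridAt (a b c : ℕ) : Prop := thirdQ a c < 18 → ∀ d < 18, NoGrid a b c d

instance (a b c : ℕ) : Decidable (NoGridAt a b c) := by
  unfold NoGridAt; infer_instance

/-- `NoGrid` for all choices of the last two points. -/
def NoGridThrough (a b : ℕ) : Prop := thirdQ a b < 18 → ∀ c < 18, NoGridAt a b c

instance (a b : ℕ) : Decidable (NoGridThrough a b) := by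
  unfold NoGridThrough; infer_instance

/-- There is no `3 × 3` grid of distinct points of `Q` all of whose rows and columns
are nonbases. -/
lemma no_grid : ∀ a < 18, ∀ b < 18, NoGridThrough a b := by
  decide +kernel

lemma bad_of_not_base {a b c : Fin 9 × Bool} (hab : a ≠ b) (hac : a ≠ c) (hbc : b ≠ c)
    (h : ({a, b, c} : Finset (Fin 9 × Bool)) ∉ matQ.bases) : badQ a b c := by
  have hcard : ({a, b, c} : Finset (Fin 9 × Bool)).card = 3 :=
    Finset.card_eq_three.2 ⟨a, b, c, hab, hac, hbc, rfl⟩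
  have hprod : ∏ x ∈ ({a, b, c} : Finset (Fin 9 × Bool)), bsgn x.2
      = bsgn a.2 * (bsgn b.2 * bsgn c.2) := by
    rw [Finset.prod_insert (by simp [hab, hac]), Finset.prod_insert (by simp [hbc]),
      Finset.prod_singleton]
  have himg : ({a, b, c} : Finset (Fin 9 × Bool)).image Prod.fst = {a.1, b.1, c.1} := by
    simp [Finset.image_insert]
  by_contra hb
  apply h
  simp only [matQ, Finset.mem_filter, Finset.mem_powersetCard, hprod, himg]
  exact ⟨⟨Finset.subset_univ _, hcard⟩, hb⟩

lemma not_base_P : ∀ i j k : Fin 9, ({i, j, k} : Finset (Fin 9)) ∈ rowcol →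
    ({(i, true), (j, true), (k, true)} : Finset (Fin 9 × Bool)) ∉ matP.bases := by
  intro i j k h hb
  simp only [matP, Finset.mem_filter] at hb
  apply hb.2
  refine ⟨by simpa [Finset.image_insert] using h, Finset.prod_eq_one ?_⟩
  intro x hx
  simp only [Finset.mem_insert, Finset.mem_singleton] at hx
  rcases hx with rfl | rfl | rfl <;> rfl

theorem stmt6 : ¬ matP.Iso matQ := by
  rintro ⟨φ, hφ, hB⟩
  have hinj : Function.Injective φ := by
    intro x y hxy
    exact hφ.injOn (by simp [matP]) (by simp [matP]) hxy
  let f : Fin 9 → ℕ := fun i => enc (φ (i, true))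
  have hf : Function.Injective f := by
    intro i j hij
    exact congrArg Prod.fst (hinj (enc_inj hij))
  have hlt : ∀ i, f i < 18 := fun i => enc_lt _
  have key : ∀ i j k : Fin 9, ({i, j, k} : Finset (Fin 9)) ∈ rowcol → i ≠ j → i ≠ k → j ≠ k →
      thirdQ (f i) (f j) = f k := by
    intro i j k h hij hik hjk
    apply badQ_third
    have hn := not_base_P i j k h
    rw [hB _ (by intro x _; simp [matP])] at hn
    simp only [Finset.image_insert, Finset.image_singleton] at hn
    apply bad_of_not_base _ _ _ hn
    · exact fun e => hij (congrArg Prod.fst (hinj e))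
    · exact fun e => hik (congrArg Prod.fst (hinj e))
    · exact fun e => hjk (congrArg Prod.fst (hinj e))
  have h2 := key 0 1 2 (by decide) (by decide) (by decide) (by decide)
  have h5 := key 3 4 5 (by decide) (by decide) (by decide) (by decide)
  have h6 := key 0 3 6 (by decide) (by decide) (by decide) (by decide)
  have h7 := key 1 4 7 (by decide) (by decide) (by decide) (by decide)
  have h8 := key 2 5 8 (by decide) (by decide) (by decide) (by decide)
  have h8' := key 6 7 8 (by decide) (by decide) (by decide) (by decide)
  have := no_grid (f 0) (hlt 0) (f 1) (hlt 1) (h2 ▸ hlt 2) (f 3) (hlt 3) (h6 ▸ hlt 6)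
    (f 4) (hlt 4) (h7 ▸ hlt 7) (h5 ▸ hlt 5)
    (by rw [h2, h5, h6, h7, h8, h8']) (by rw [h2, h5, h8]; exact hlt 8)
  rw [h2, h5, h6, h7, h8] at this
  apply this
  exact (List.nodup_map_iff hf (l := [0, 1, 2, 3, 4, 5, 6, 7, 8])).2 (by decide)

end MatroidGame
end

section
/- There is no 9-element subset X of E such that the restriction P|X is isomorphic to the matroid N₀, where N₀ is the rank-3 matroid on {1,…,9} whose bases are all 3-element subsets except {1,2,3}, {4,5,6}, and {7,8,9}. -/
open scoped BigOperators TensorProduct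

namespace MatroidGame

open PreMatroid

/-- The rank-3 matroid `N₀` on `{1,…,9}` with nonbases `{1,2,3}, {4,5,6}, {7,8,9}`. -/
def matN0 : PreMatroid (Fin 9) :=
  ⟨Finset.univ,
    ((Finset.univ : Finset (Fin 9)).powersetCard 3).filter fun B =>
      B ≠ {0, 1, 2} ∧ B ≠ {3, 4, 5} ∧ B ≠ {6, 7, 8}⟩

/-- Encoding of the elements of the ground set as numbers below 18. -/
def code (x : Fin 9 × Bool) : ℕ := 2 * x.1.val + x.2.toNat

/-- Bitmasks of the 24 nonbases of `matP`. -/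
def masks : List ℕ :=
  [37, 25, 22, 42, 2368, 1600, 1408, 2688,
   151552, 102400, 90112, 172032, 8257, 4225, 4162, 8322,
   33028, 16900, 16648, 33288, 132112, 67600, 66592, 133152]

/-- The set with a given bitmask. -/
def setOf (m : ℕ) : Finset (Fin 9 × Bool) := Finset.univ.filter fun x => m.testBit (code x) = true

theorem mem_setOf {m : ℕ} {x : Fin 9 × Bool} : x ∈ setOf m ↔ m.testBit (code x) = true := by
  simp [setOf]

/-- The rows and columns, as triples. -/
def triples : List (Fin 9 × Fin 9 × Fin 9) :=
  [(0, 1, 2), (3, 4, 5), (6, 7, 8), (0, 3, 6), (1, 4, 7), (2, 5, 8)]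

/-- `D` is a nonbasis of `matP`. -/
def PLine (D : Finset (Fin 9 × Bool)) : Prop :=
  D.image Prod.fst ∈ rowcol ∧ (∏ x ∈ D, bsgn x.2) = 1

theorem rowcol_iff (S : Finset (Fin 9)) :
    S ∈ rowcol ↔ ∃ t ∈ triples, S = {t.1, t.2.1, t.2.2} := by
  simp [rowcol, triples]

theorem triples_ne : ∀ t ∈ triples, t.1 ≠ t.2.1 ∧ t.1 ≠ t.2.2 ∧ t.2.1 ≠ t.2.2 := by
  decide +kernel

theorem line_iff {D : Finset (Fin 9 × Bool)} (hD : D.card = 3) {a b c : Fin 9} (hab : a ≠ b)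
    (hac : a ≠ c) (hbc : b ≠ c) :
    (D.image Prod.fst = {a, b, c} ∧ (∏ x ∈ D, bsgn x.2) = 1) ↔
      ∃ s t, D = {(a, s), (b, t), (c, s == t)} := by
  have hp : ∀ s t u, (∏ x ∈ ({(a, s), (b, t), (c, u)} : Finset (Fin 9 × Bool)), bsgn x.2) =
      bsgn s * (bsgn t * bsgn u) := by
    intro s t u
    rw [Finset.prod_insert (by simp [hab, hac]), Finset.prod_insert (by simp [hbc]),
      Finset.prod_singleton]
  constructor
  · rintro ⟨him, hprod⟩
    have ex : ∀ i ∈ ({a, b, c} : Finset (Fin 9)), ∃ s, (i, s) ∈ D := by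
      intro i hi
      rw [← him] at hi
      obtain ⟨⟨j, s⟩, hx, rfl⟩ := Finset.mem_image.1 hi
      exact ⟨s, hx⟩
    obtain ⟨s, hs⟩ := ex a (by simp)
    obtain ⟨t, ht⟩ := ex b (by simp)
    obtain ⟨u, hu⟩ := ex c (by simp)
    have hEq : {(a, s), (b, t), (c, u)} = D := by
      refine Finset.eq_of_subset_of_card_le ?_ ?_
      · intro x hx
        simp only [Finset.mem_insert, Finset.mem_singleton] at hx
        rcases hx with rfl | rfl | rfl <;> assumption
      · rw [hD, Finset.card_eq_three.2 ⟨(a, s), (b, t), (c, u), by simp [hab], by simp [hac],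
          by simp [hbc], rfl⟩]
    rw [← hEq, hp] at hprod
    refine ⟨s, t, ?_⟩
    rw [← hEq]
    have : u = (s == t) := by
      revert hprod
      clear * -
      revert s t u
      decide
    rw [this]
  · rintro ⟨s, t, rfl⟩
    refine ⟨by simp [Finset.image_insert], ?_⟩
    rw [hp]
    cases s <;> cases t <;> rfl

set_option maxRecDepth 100000 in
theorem to_mask : ∀ t ∈ triples, ∀ p q : Bool, ∃ m ∈ masks, ∀ x : Fin 9 × Bool,
    m.testBit (code x) = true ↔ x = (t.1, p) ∨ x = (t.2.1, q) ∨ x = (t.2.2, p == q) := by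
  decide +kernel

set_option maxRecDepth 100000 in
theorem of_mask : ∀ m ∈ masks, ∃ t ∈ triples, ∃ p q : Bool, ∀ x : Fin 9 × Bool,
    m.testBit (code x) = true ↔ x = (t.1, p) ∨ x = (t.2.1, q) ∨ x = (t.2.2, p == q) := by
  decide +kernel

theorem mem_pLines {D : Finset (Fin 9 × Bool)} (hD : D.card = 3) (h : PLine D) :
    ∃ m ∈ masks, D = setOf m := by
  obtain ⟨h1, h2⟩ := h
  obtain ⟨t, ht, h1⟩ := (rowcol_iff _).1 h1
  obtain ⟨n1, n2, n3⟩ := triples_ne t ht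
  obtain ⟨p, q, rfl⟩ := (line_iff hD n1 n2 n3).1 ⟨h1, h2⟩
  obtain ⟨m, hm, hx⟩ := to_mask t ht p q
  refine ⟨m, hm, ?_⟩
  ext x
  rw [mem_setOf, hx]
  simp

theorem mask_spec {m : ℕ} (hm : m ∈ masks) : (setOf m).card = 3 ∧ PLine (setOf m) := by
  obtain ⟨t, ht, p, q, hx⟩ := of_mask m hm
  obtain ⟨n1, n2, n3⟩ := triples_ne t ht
  have hEq : setOf m = {(t.1, p), (t.2.1, q), (t.2.2, p == q)} := by
    ext x
    rw [mem_setOf, hx]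
    simp
  have hc : (setOf m).card = 3 := by
    rw [hEq]
    exact Finset.card_eq_three.2 ⟨_, _, _, by simp [n1], by simp [n2], by simp [n3], rfl⟩
  have := (line_iff hc n1 n2 n3).2 ⟨p, q, hEq⟩
  exact ⟨hc, (rowcol_iff _).2 ⟨t, ht, this.1⟩, this.2⟩

set_option maxRecDepth 100000 in
theorem mask_disj : ∀ a ∈ masks, ∀ b ∈ masks, Nat.beq (a &&& b) 0 = true ∨
    ∃ x : Fin 9 × Bool, a.testBit (code x) = true ∧ b.testBit (code x) = true := by
  decide +kernel

set_option maxRecDepth 100000 in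
theorem mask_ne : ∀ a ∈ masks, ∀ b ∈ masks, Nat.beq a b = true ∨
    ∃ x : Fin 9 × Bool, a.testBit (code x) = true ∧ b.testBit (code x) = false := by
  decide +kernel

set_option maxRecDepth 100000 in
theorem mask_fourth : (masks.all fun a => masks.all fun b => !(Nat.beq (a &&& b) 0) ||
    masks.all fun c => !(Nat.beq (c &&& a) 0) || (!(Nat.beq (c &&& b) 0) ||
      masks.any fun d => Nat.beq (d &&& (a ||| (b ||| c))) d &&
        (!(Nat.beq d a) && (!(Nat.beq d b) && !(Nat.beq d c))))) = true := by
  decide +kernel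

theorem beq_of_disj {a b : ℕ} (ha : a ∈ masks) (hb : b ∈ masks)
    (h : ∀ x ∈ setOf a, x ∉ setOf b) : Nat.beq (a &&& b) 0 = true := by
  rcases mask_disj a ha b hb with h' | ⟨x, h1, h2⟩
  · exact h'
  · exact absurd (mem_setOf.2 h2) (h x (mem_setOf.2 h1))

theorem ne_of_beq {a b : ℕ} (ha : a ∈ masks) (hb : b ∈ masks) (h : Nat.beq a b = false) :
    setOf a ≠ setOf b := by
  intro hEq
  rcases mask_ne a ha b hb with h' | ⟨x, h1, h2⟩
  · rw [h] at h'
    cases h'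
  · have := mem_setOf.2 h1
    rw [hEq, mem_setOf, h2] at this
    cases this

theorem fourth_line {A B C : Finset (Fin 9 × Bool)} (hcA : A.card = 3) (hcB : B.card = 3)
    (hcC : C.card = 3) (hA : PLine A) (hB : PLine B) (hC : PLine C)
    (hAB : ∀ x ∈ A, x ∉ B) (hCAB : ∀ x ∈ C, x ∉ A ∧ x ∉ B) :
    ∃ D, D.card = 3 ∧ PLine D ∧ (∀ x ∈ D, x ∈ A ∨ x ∈ B ∨ x ∈ C) ∧ D ≠ A ∧ D ≠ B ∧ D ≠ C := by
  obtain ⟨a, ha, rfl⟩ := mem_pLines hcA hA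
  obtain ⟨b, hb, rfl⟩ := mem_pLines hcB hB
  obtain ⟨c, hc, rfl⟩ := mem_pLines hcC hC
  have h := List.all_eq_true.1 (List.all_eq_true.1 mask_fourth a ha) b hb
  rw [beq_of_disj ha hb hAB, Bool.not_true, Bool.false_or] at h
  have h := List.all_eq_true.1 h c hc
  rw [beq_of_disj hc ha fun x hx => (hCAB x hx).1, beq_of_disj hc hb fun x hx => (hCAB x hx).2,
    Bool.not_true, Bool.false_or, Bool.false_or] at h
  obtain ⟨d, hd, h⟩ := List.any_eq_true.1 h
  simp only [Bool.and_eq_true, Bool.not_eq_true'] at h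
  obtain ⟨h0, h1, h2, h3⟩ := h
  refine ⟨setOf d, (mask_spec hd).1, (mask_spec hd).2, ?_, ne_of_beq hd ha h1,
    ne_of_beq hd hb h2, ne_of_beq hd hc h3⟩
  intro x hx
  rw [mem_setOf, ← Nat.eq_of_beq_eq_true h0] at hx
  simp only [Nat.testBit_and, Nat.testBit_or, Bool.and_eq_true, Bool.or_eq_true] at hx
  simpa only [mem_setOf] using hx.2

theorem matP_mem {B : Finset (Fin 9 × Bool)} (h : B.card = 3) :
    B ∈ matP.bases ↔ ¬ PLine B := by
  simp only [matP, Finset.mem_filter, Finset.mem_powersetCard, Finset.subset_univ, true_and, h]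
  rfl

theorem matP_card {B : Finset (Fin 9 × Bool)} (h : B ∈ matP.bases) : B.card = 3 := by
  simp only [matP, Finset.mem_filter, Finset.mem_powersetCard] at h
  exact h.1.2

theorem restrict_mem {X B : Finset (Fin 9 × Bool)} (hBX : B ⊆ X) (h : B.card = 3) :
    B ∈ (matP.restrict X).bases ↔ ¬ PLine B := by
  rw [← matP_mem h]
  simp only [restrict, Finset.mem_filter, Finset.mem_powerset]
  constructor
  · rintro ⟨-, ⟨B', hB', hs⟩, -⟩
    rwa [Finset.eq_of_subset_of_card_le hs (by rw [matP_card hB', h])]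
  · intro hB
    refine ⟨hBX, ⟨B, hB, subset_rfl⟩, ?_⟩
    rintro I - ⟨B', hB', hs⟩ hBI
    refine (Finset.eq_of_subset_of_card_le hBI ?_).symm
    have := Finset.card_le_card hs
    rw [matP_card hB'] at this
    omega

theorem matN0_mem {B : Finset (Fin 9)} (h : B.card = 3) :
    B ∈ matN0.bases ↔ ¬ (B = {0, 1, 2} ∨ B = {3, 4, 5} ∨ B = {6, 7, 8}) := by
  simp only [matN0, Finset.mem_filter, Finset.mem_powersetCard, Finset.subset_univ, true_and, h]
  tauto

theorem stmt8 :
    ¬ ∃ X : Finset (Fin 9 × Bool), X.card = 9 ∧ (matP.restrict X).Iso matN0 := by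
  rintro ⟨X, -, φ, hbij, hiso⟩
  change Set.BijOn φ ↑X ↑(Finset.univ : Finset (Fin 9)) at hbij
  change ∀ B ⊆ X, _ at hiso
  have key : ∀ D ⊆ X, D.card = 3 → (PLine D ↔
      (D.image φ = {0, 1, 2} ∨ D.image φ = {3, 4, 5} ∨ D.image φ = {6, 7, 8})) := by
    intro D hD hc
    have hc' : (D.image φ).card = 3 := by
      rw [Finset.card_image_of_injOn, hc]
      exact hbij.injOn.mono (Finset.coe_subset.2 hD)
    have := hiso D hD
    rw [restrict_mem hD hc, matN0_mem hc'] at this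
    exact not_iff_not.1 this
  have pre : ∀ S : Finset (Fin 9), (X.filter fun x => φ x ∈ S).image φ = S := by
    intro S
    ext i
    simp only [Finset.mem_image, Finset.mem_filter]
    constructor
    · rintro ⟨x, ⟨-, h⟩, rfl⟩
      exact h
    · intro hi
      obtain ⟨x, hx, rfl⟩ := hbij.surjOn (by simp : i ∈ _)
      exact ⟨x, ⟨hx, hi⟩, rfl⟩
  have prec : ∀ S : Finset (Fin 9), (X.filter fun x => φ x ∈ S).card = S.card := by
    intro S
    conv_rhs => rw [← pre S]
    rw [Finset.card_image_of_injOn]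
    exact hbij.injOn.mono (Finset.coe_subset.2 (Finset.filter_subset _ _))
  have uniq : ∀ (S : Finset (Fin 9)) (D : Finset (Fin 9 × Bool)), D ⊆ X → D.image φ = S →
      D = X.filter fun x => φ x ∈ S := by
    rintro S D hD rfl
    refine Finset.eq_of_subset_of_card_le (fun x hx => ?_) ?_
    · exact Finset.mem_filter.2 ⟨hD hx, Finset.mem_image_of_mem _ hx⟩
    · rw [prec]
      exact Finset.card_image_le
  have hA := (key _ (Finset.filter_subset _ _) (prec {0, 1, 2})).2 (Or.inl (pre _))
  have hB := (key _ (Finset.filter_subset _ _) (prec {3, 4, 5})).2 (Or.inr (Or.inl (pre _)))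
  have hC := (key _ (Finset.filter_subset _ _) (prec {6, 7, 8})).2 (Or.inr (Or.inr (pre _)))
  have d1 : ∀ i : Fin 9, i ∈ ({0, 1, 2} : Finset (Fin 9)) → i ∉ ({3, 4, 5} : Finset (Fin 9)) := by
    decide
  have d2 : ∀ i : Fin 9, i ∈ ({6, 7, 8} : Finset (Fin 9)) →
      i ∉ ({0, 1, 2} : Finset (Fin 9)) ∧ i ∉ ({3, 4, 5} : Finset (Fin 9)) := by
    decide
  obtain ⟨D, hDc, hD, hsub, nA, nB, nC⟩ := fourth_line (prec _) (prec _) (prec _) hA hB hC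
    (fun x hx hx' => d1 _ (Finset.mem_filter.1 hx).2 (Finset.mem_filter.1 hx').2)
    (fun x hx => ⟨fun hx' => (d2 _ (Finset.mem_filter.1 hx).2).1 (Finset.mem_filter.1 hx').2,
      fun hx' => (d2 _ (Finset.mem_filter.1 hx).2).2 (Finset.mem_filter.1 hx').2⟩)
  have hDX : D ⊆ X := by
    intro x hx
    rcases hsub x hx with h | h | h <;> exact (Finset.mem_filter.1 h).1
  rcases (key D hDX hDc).1 hD with h | h | h
  · exact nA (uniq _ _ hDX h)
  · exact nB (uniq _ _ hDX h)
  · exact nC (uniq _ _ hDX h)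

end MatroidGame
end

section
/- Let M and N be matroids with collections S_M ⊆ 2^{E(M)} and S_N ⊆ 2^{E(N)}, and suppose the isomorphism algebra 𝔄•(M,N,S) is nonzero. If a = (S_a,p_a) ∈ S•(M) and x = (S_x,p_x) ∈ S•(N) satisfy |S_a| ≠ |S_x|, then the image of the generator u_{ax} in 𝔄•(M,N,S) equals 0. -/
open scoped BigOperators TensorProduct

namespace MatroidGame

open PreMatroid

/-- The number of pointed sets over a fixed member of `S` is its cardinality. -/
theorem card_fiber {α : Type*} [Fintype α] [DecidableEq α] (S : Finset (Finset α))
    (a : PtSet S) :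
    (Finset.univ.filter fun b : PtSet S => b.val.1 = a.val.1).card = a.val.1.card := by
  refine Finset.card_bij (fun b _ => b.val.2) ?_ ?_ ?_
  · intro b hb
    have hb' := (Finset.mem_filter.mp hb).2
    have := b.2.2
    rwa [hb'] at this
  · intro b hb c hc hbc
    have hb' := (Finset.mem_filter.mp hb).2
    have hc' := (Finset.mem_filter.mp hc).2
    exact Subtype.ext (Prod.ext (hb'.trans hc'.symm) hbc)
  · intro p hp
    exact ⟨⟨(a.val.1, p), a.2.1, hp⟩, by simp, rfl⟩

theorem relNum_ne {α β : Type*} [DecidableEq α] [DecidableEq β] (a b : Finset α × α)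
    (x y : Finset β × β) (h : ¬(a.1 = b.1 ↔ x.1 = y.1)) : relNum a b ≠ relNum x y := by
  unfold relNum
  split_ifs <;> simp_all

theorem matGen_mul_eq_zero {α β : Type*} [Fintype α] [Fintype β] [DecidableEq α]
    [DecidableEq β] (S_M : Finset (Finset α)) (S_N : Finset (Finset β)) (a b : PtSet S_M)
    (x y : PtSet S_N) (h : ¬(a.val.1 = b.val.1 ↔ x.val.1 = y.val.1)) :
    matGen S_M S_N a x * matGen S_M S_N b y = 0 := by
  have := RingQuot.mkAlgHom_rel ℂ (IsoRel.mismatch (rI := ptRel S_M) (rJ := ptRel S_N)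
    a b x y (relNum_ne _ _ _ _ h))
  simpa [matGen, isoGen] using this

theorem matGen_rowSum {α β : Type*} [Fintype α] [Fintype β] [DecidableEq α]
    [DecidableEq β] (S_M : Finset (Finset α)) (S_N : Finset (Finset β)) (b : PtSet S_M) :
    ∑ y, matGen S_M S_N b y = 1 := by
  have := RingQuot.mkAlgHom_rel ℂ (IsoRel.magic (rI := ptRel S_M) (rJ := ptRel S_N)
    (MagicRel.rowSum b))
  simpa [matGen, isoGen] using this

theorem matGen_colSum {α β : Type*} [Fintype α] [Fintype β] [DecidableEq α]
    [DecidableEq β] (S_M : Finset (Finset α)) (S_N : Finset (Finset β)) (y : PtSet S_N) :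
    ∑ b, matGen S_M S_N b y = 1 := by
  have := RingQuot.mkAlgHom_rel ℂ (IsoRel.magic (rI := ptRel S_M) (rJ := ptRel S_N)
    (MagicRel.colSum y))
  simpa [matGen, isoGen] using this

theorem stmt9 {α β : Type*} [Fintype α] [Fintype β] [DecidableEq α] [DecidableEq β]
    (M : PreMatroid α) (N : PreMatroid β) (hM : M.IsMatroid) (hN : N.IsMatroid)
    (S_M : Finset (Finset α)) (S_N : Finset (Finset β))
    (hSM : ∀ A ∈ S_M, A ⊆ M.E) (hSN : ∀ A ∈ S_N, A ⊆ N.E)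
    (hnz : Nontrivial (MatIsoAlgebra S_M S_N))
    (a : PtSet S_M) (x : PtSet S_N) (h : a.val.1.card ≠ x.val.1.card) :
    matGen S_M S_N a x = 0 := by
  classical
  let I := Finset.univ.filter fun b : PtSet S_M => b.val.1 = a.val.1
  let J := Finset.univ.filter fun y : PtSet S_N => y.val.1 = x.val.1
  have hrow : ∀ b ∈ I, ∑ y ∈ J, matGen S_M S_N a x * matGen S_M S_N b y
      = matGen S_M S_N a x := by
    intro b hb
    have hb' : b.val.1 = a.val.1 := (Finset.mem_filter.mp hb).2
    rw [Finset.sum_subset (Finset.subset_univ J), ← Finset.mul_sum, matGen_rowSum, mul_one]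
    intro y _ hy
    have hy' : ¬ y.val.1 = x.val.1 := fun e => hy (Finset.mem_filter.mpr ⟨Finset.mem_univ _, e⟩)
    exact matGen_mul_eq_zero _ _ _ _ _ _ (fun e => hy' (e.mp hb'.symm).symm)
  have hcol : ∀ y ∈ J, ∑ b ∈ I, matGen S_M S_N a x * matGen S_M S_N b y
      = matGen S_M S_N a x := by
    intro y hy
    have hy' : y.val.1 = x.val.1 := (Finset.mem_filter.mp hy).2
    rw [Finset.sum_subset (Finset.subset_univ I), ← Finset.mul_sum, matGen_colSum, mul_one]
    intro b _ hb
    have hb' : ¬ b.val.1 = a.val.1 := fun e => hb (Finset.mem_filter.mpr ⟨Finset.mem_univ _, e⟩)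
    exact matGen_mul_eq_zero _ _ _ _ _ _ (fun e => hb' (e.mpr hy'.symm).symm)
  have key : (a.val.1.card : ℂ) • matGen S_M S_N a x
      = (x.val.1.card : ℂ) • matGen S_M S_N a x := by
    have h1 := Finset.sum_congr rfl hrow
    have h2 := Finset.sum_congr rfl hcol
    rw [Finset.sum_comm, h2, Finset.sum_const, Finset.sum_const, card_fiber, card_fiber] at h1
    rw [Nat.cast_smul_eq_nsmul, Nat.cast_smul_eq_nsmul]
    exact h1.symm
  have hne : (a.val.1.card : ℂ) - (x.val.1.card : ℂ) ≠ 0 :=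
    sub_ne_zero.mpr (by exact_mod_cast h)
  have h0 : ((a.val.1.card : ℂ) - (x.val.1.card : ℂ)) • matGen S_M S_N a x = 0 := by
    rw [sub_eq_add_neg, add_smul, key, ← add_smul, add_neg_cancel, zero_smul]
  rw [← one_smul ℂ (matGen S_M S_N a x), ← inv_mul_cancel₀ hne, mul_smul, h0, smul_zero]

end MatroidGame
end

section
/- Let M and N be loopless matroids, and take S_M = B(M) and S_N = B(N) to be their collections of bases. If the isomorphism algebra 𝔄•(M,N,B) is nonzero, then rk(M) = rk(N) and |E(M)| = |E(N)|. -/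
open scoped BigOperators TensorProduct

namespace MatroidGame

open PreMatroid

section Helpers

variable {I J S T A : Type*} [Fintype I] [Fintype J] [DecidableEq S] [DecidableEq T] [Ring A]

/-- The block sum along a row equals the block sum along a column. -/
lemma block_eq (u : I → J → A) (s : I → S) (t : J → T)
    (hr : ∀ a, ∑ x, u a x = 1) (hc : ∀ x, ∑ a, u a x = 1)
    (h0 : ∀ a b x y, ¬(s a = s b ↔ t x = t y) → u a x * u b y = 0) (a : I) (x : J) :
    ∑ y, (if t y = t x then u a y else 0) = ∑ b, (if s b = s a then u b x else 0) := by
  have h1 : ∑ y, (if t y = t x then u a y else 0)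
      = ∑ y, ∑ b, (if t y = t x then u a y else 0) * u b x := by
    refine Finset.sum_congr rfl fun y _ => ?_
    rw [← Finset.mul_sum, hc, mul_one]
  have h2 : ∑ b, (if s b = s a then u b x else 0)
      = ∑ b, ∑ y, u a y * (if s b = s a then u b x else 0) := by
    refine Finset.sum_congr rfl fun b _ => ?_
    rw [← Finset.sum_mul, hr, one_mul]
  rw [h1, h2, Finset.sum_comm]
  refine Finset.sum_congr rfl fun b _ => Finset.sum_congr rfl fun y _ => ?_
  by_cases p : t y = t x <;> by_cases q : s b = s a
  · simp [p, q]
  · simp only [p, q, if_true, if_false, mul_zero]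
    exact h0 _ _ _ _ (fun h => q (h.2 p).symm)
  · simp only [p, q, if_true, if_false, zero_mul]
    exact (h0 _ _ _ _ (fun h => p (h.1 q.symm))).symm
  · simp [p, q]

lemma card_image_eq [CharZero A] (u : I → J → A) (s : I → S) (t : J → T)
    (hr : ∀ a, ∑ x, u a x = 1) (hc : ∀ x, ∑ a, u a x = 1)
    (h0 : ∀ a b x y, ¬(s a = s b ↔ t x = t y) → u a x * u b y = 0) :
    (Finset.univ.image s).card = (Finset.univ.image t).card := by
  have hs : ∀ e : (Finset.univ.image s), ∃ a, s a = e.1 := fun e => by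
    obtain ⟨a, _, h⟩ := Finset.mem_image.1 e.2
    exact ⟨a, h⟩
  have ht : ∀ e : (Finset.univ.image t), ∃ a, t a = e.1 := fun e => by
    obtain ⟨a, _, h⟩ := Finset.mem_image.1 e.2
    exact ⟨a, h⟩
  choose f hf using hs
  choose g hg using ht
  have key : ∑ e, ∑ d, ∑ y, (if t y = t (g d) then u (f e) y else 0)
      = ∑ d, ∑ e, ∑ b, (if s b = s (f e) then u b (g d) else 0) := by
    rw [Finset.sum_comm]
    exact Finset.sum_congr rfl fun d _ => Finset.sum_congr rfl fun e _ =>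
      block_eq u s t hr hc h0 _ _
  have e1 : ∀ e, ∑ d, ∑ y, (if t y = t (g d) then u (f e) y else 0) = 1 := fun e => by
    rw [Finset.sum_comm, ← hr (f e)]
    refine Finset.sum_congr rfl fun y _ => ?_
    rw [Finset.sum_eq_single ⟨t y, by simp⟩]
    · simp [hg]
    · intro b _ hb
      rw [if_neg]
      intro h
      exact hb (Subtype.ext (by simp [h, hg]))
    · simp
  have e2 : ∀ d, ∑ e, ∑ b, (if s b = s (f e) then u b (g d) else 0) = 1 := fun d => by
    rw [Finset.sum_comm, ← hc (g d)]
    refine Finset.sum_congr rfl fun y _ => ?_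
    rw [Finset.sum_eq_single ⟨s y, by simp⟩]
    · simp [hf]
    · intro b _ hb
      rw [if_neg]
      intro h
      exact hb (Subtype.ext (by simp [h, hf]))
    · simp
  simp only [e1, e2] at key
  simpa using key

lemma class_card_eq [CharZero A] (u : I → J → A) (s : I → S) (t : J → T)
    (hr : ∀ a, ∑ x, u a x = 1) (hc : ∀ x, ∑ a, u a x = 1)
    (h0 : ∀ a b x y, ¬(s a = s b ↔ t x = t y) → u a x * u b y = 0) (m n : ℕ)
    (hm : ∀ a, (Finset.univ.filter fun b => s b = s a).card = m)
    (hn : ∀ x, (Finset.univ.filter fun y => t y = t x).card = n) (a : I) :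
    m = n := by
  -- abbreviations for the block sums
  let L : I → J → A := fun a x => ∑ y, (if t y = t x then u a y else 0)
  have hLR : ∀ a x, L a x = ∑ b, (if s b = s a then u b x else 0) :=
    block_eq u s t hr hc h0
  have hLs : ∀ a b x, s b = s a → L b x = L a x := fun a b x h => by
    rw [hLR, hLR, h]
  have hLt : ∀ a x y, t y = t x → L a y = L a x := fun a x y h => by
    simp only [L, h]
  have hmn : ∀ x, (m : A) * L a x = n * L a x := fun x => by
    have h1 : ∑ b, (if s b = s a then L b x else 0) = (m : A) * L a x := by
      rw [← hm a, ← Finset.sum_filter, Finset.sum_congr rfl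
        (fun b hb => hLs a b x (Finset.mem_filter.1 hb).2)]
      simp
    have h2 : ∑ y, (if t y = t x then L a y else 0) = (n : A) * L a x := by
      rw [← hn x, ← Finset.sum_filter, Finset.sum_congr rfl
        (fun b hb => hLt a x b (Finset.mem_filter.1 hb).2)]
      simp
    rw [← h1, ← h2]
    have h3 : ∀ b, (if s b = s a then L b x else 0)
        = ∑ y, (if t y = t x then (if s b = s a then u b y else 0) else 0) := fun b => by
      split_ifs with h <;> simp [L]
    simp only [h3]
    rw [Finset.sum_comm]
    refine Finset.sum_congr rfl fun y _ => ?_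
    rw [hLR]
    split_ifs <;> simp
  have hsum : ∑ x, L a x = (n : A) := by
    simp only [L]
    rw [Finset.sum_comm]
    have : ∀ y, ∑ x, (if t y = t x then u a y else 0) = (n : A) * u a y := fun y => by
      rw [← hn y, ← Finset.sum_filter]
      simp [eq_comm]
    simp only [this]
    rw [← Finset.mul_sum, hr, mul_one]
  have h4 : (m : A) * n = n * n := by
    rw [← hsum, Finset.mul_sum, Finset.sum_congr rfl fun x _ => hmn x, ← Finset.mul_sum, hsum]
  have h5 : m * n = n * n := by exact_mod_cast h4
  have hJ : Nonempty J := by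
    by_contra h
    rw [not_nonempty_iff] at h
    have := hr a
    simp at this
  obtain ⟨x⟩ := hJ
  have hpos : 0 < n := by
    rw [← hn x]
    exact Finset.card_pos.2 ⟨x, by simp⟩
  exact Nat.eq_of_mul_eq_mul_right hpos h5

end Helpers

lemma rk_eq_card {α : Type*} [DecidableEq α] (M : PreMatroid α) (hM : M.IsMatroid)
    {B : Finset α} (hB : B ∈ M.bases) : M.rk = B.card := by
  unfold PreMatroid.rk PreMatroid.rkSet
  apply le_antisymm
  · refine Finset.sup_le fun I hI => ?_
    obtain ⟨B', hB', hI'⟩ := (Finset.mem_filter.1 hI).2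
    rw [hM.2.2.1 B hB B' hB']
    exact Finset.card_le_card hI'
  · exact Finset.le_sup (f := Finset.card) (Finset.mem_filter.2
      ⟨Finset.mem_powerset.2 (hM.2.1 B hB), B, hB, Finset.Subset.refl _⟩)

lemma image_snd {α : Type*} [Fintype α] [DecidableEq α] (M : PreMatroid α) (hM : M.IsMatroid)
    (hL : M.Loopless) :
    (Finset.univ : Finset (PtSet M.bases)).image (fun v => v.1.2) = M.E := by
  ext e
  simp only [Finset.mem_image, Finset.mem_univ, true_and]
  constructor
  · rintro ⟨⟨⟨B, p⟩, hB, hp⟩, rfl⟩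
    exact hM.2.1 B hB hp
  · intro he
    by_contra h
    exact hL e ⟨he, fun B hB hp => h ⟨⟨(B, e), hB, hp⟩, rfl⟩⟩

lemma fiber_card {α : Type*} [Fintype α] [DecidableEq α] (M : PreMatroid α)
    (hM : M.IsMatroid) (a : PtSet M.bases) :
    ((Finset.univ : Finset (PtSet M.bases)).filter fun b => b.1.1 = a.1.1).card = M.rk := by
  rw [rk_eq_card M hM a.2.1]
  refine Finset.card_bij (fun b _ => b.1.2) ?_ ?_ ?_
  · intro b hb
    rw [← (Finset.mem_filter.1 hb).2]
    exact b.2.2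
  · intro b hb c hc h
    exact Subtype.ext (Prod.ext
      ((Finset.mem_filter.1 hb).2.trans (Finset.mem_filter.1 hc).2.symm) h)
  · intro p hp
    exact ⟨⟨(a.1.1, p), a.2.1, hp⟩, by simp, rfl⟩

lemma rk_zero_of_isEmpty {α : Type*} [DecidableEq α] (M : PreMatroid α)
    (hM : M.IsMatroid) (h : IsEmpty (PtSet M.bases)) : M.rk = 0 := by
  obtain ⟨B, hB⟩ := hM.1
  rw [rk_eq_card M hM hB, Finset.card_eq_zero, Finset.eq_empty_iff_forall_notMem]
  exact fun p hp => h.false ⟨(B, p), hB, hp⟩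

lemma relNum_fst {α β : Type*} [DecidableEq α] [DecidableEq β] (a b : Finset α × α)
    (x y : Finset β × β) (h : relNum a b = relNum x y) : a.1 = b.1 ↔ x.1 = y.1 := by
  unfold relNum at h
  by_cases h1 : a.1 = b.1 <;> by_cases h2 : x.1 = y.1 <;> by_cases h3 : a.2 = b.2 <;>
    by_cases h4 : x.2 = y.2 <;> simp [h1, h2, h3, h4] at h ⊢

lemma relNum_snd {α β : Type*} [DecidableEq α] [DecidableEq β] (a b : Finset α × α)
    (x y : Finset β × β) (h : relNum a b = relNum x y) : a.2 = b.2 ↔ x.2 = y.2 := by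
  unfold relNum at h
  by_cases h1 : a.1 = b.1 <;> by_cases h2 : x.1 = y.1 <;> by_cases h3 : a.2 = b.2 <;>
    by_cases h4 : x.2 = y.2 <;> simp [h1, h2, h3, h4] at h ⊢

theorem stmt11 {α β : Type*} [Fintype α] [Fintype β] [DecidableEq α] [DecidableEq β]
    (M : PreMatroid α) (N : PreMatroid β) (hM : M.IsMatroid) (hN : N.IsMatroid)
    (hLM : M.Loopless) (hLN : N.Loopless)
    (hnz : Nontrivial (MatIsoAlgebra M.bases N.bases)) :
    M.rk = N.rk ∧ M.E.card = N.E.card := by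
  classical
  have : CharZero (MatIsoAlgebra M.bases N.bases) :=
    charZero_of_injective_algebraMap (algebraMap ℂ (MatIsoAlgebra M.bases N.bases)).injective
  let u := matGen M.bases N.bases
  have hr : ∀ a, ∑ x, u a x = 1 := fun a => by
    have := RingQuot.mkAlgHom_rel ℂ (IsoRel.magic (rI := ptRel M.bases) (rJ := ptRel N.bases)
      (MagicRel.rowSum (I := PtSet M.bases) (J := PtSet N.bases) a))
    rw [map_sum, map_one] at this
    exact this
  have hc : ∀ x, ∑ a, u a x = 1 := fun x => by
    have := RingQuot.mkAlgHom_rel ℂ (IsoRel.magic (rI := ptRel M.bases) (rJ := ptRel N.bases)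
      (MagicRel.colSum (I := PtSet M.bases) (J := PtSet N.bases) x))
    rw [map_sum, map_one] at this
    exact this
  have hmis : ∀ a b x y, ptRel M.bases a b ≠ ptRel N.bases x y → u a x * u b y = 0 :=
    fun a b x y h => by
      have := RingQuot.mkAlgHom_rel ℂ (IsoRel.mismatch (rI := ptRel M.bases)
        (rJ := ptRel N.bases) a b x y h)
      rw [map_mul, map_zero] at this
      exact this
  constructor
  · by_cases hI : Nonempty (PtSet M.bases)
    · obtain ⟨a⟩ := hI
      refine class_card_eq u (fun v => v.1.1) (fun v => v.1.1) hr hc (fun a b x y h => ?_)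
        M.rk N.rk (fiber_card M hM) (fiber_card N hN) a
      exact hmis a b x y fun h' => h (relNum_fst _ _ _ _ h')
    · rw [not_nonempty_iff] at hI
      have hJ : IsEmpty (PtSet N.bases) := ⟨fun x => by
        have := hc x
        simp at this⟩
      rw [rk_zero_of_isEmpty M hM hI, rk_zero_of_isEmpty N hN hJ]
  · rw [← image_snd M hM hLM, ← image_snd N hN hLN]
    refine card_image_eq u _ _ hr hc (fun a b x y h => ?_)
    exact hmis a b x y fun h' => h (relNum_snd _ _ _ _ h')

end MatroidGame
end

section
/- Let M and N be matroids with collections S_M ⊆ 2^{E(M)} and S_N ⊆ 2^{E(N)} such that S_M covers M and S_N covers N. If the isomorphism algebra 𝔄•(M,N,S) is nonzero, then |E(M)| = |E(N)|. -/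
open scoped BigOperators TensorProduct

namespace MatroidGame

open PreMatroid

theorem key_fiber {A I J α β : Type*} [Ring A] [Fintype I] [Fintype J]
    [DecidableEq α] [DecidableEq β] (u : I → J → A) (f : I → α) (g : J → β)
    (hrow : ∀ a, ∑ x, u a x = 1) (hcol : ∀ x, ∑ a, u a x = 1)
    (hmis : ∀ a b x y, ¬(f a = f b ↔ g x = g y) → u a x * u b y = 0) (a : I) (x : J) :
    ∑ y with g y = g x, u a y = ∑ b with f b = f a, u b x := by
  have h1 : ∑ y with g y = g x, u a y
      = (∑ y with g y = g x, u a y) * (∑ b with f b = f a, u b x) := by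
    conv_lhs => rw [← mul_one (∑ y with g y = g x, u a y), ← hcol x]
    rw [Finset.sum_mul, Finset.sum_mul]
    refine Finset.sum_congr rfl fun y hy => ?_
    rw [Finset.mul_sum, Finset.mul_sum]
    symm
    refine Finset.sum_subset (Finset.filter_subset _ _) fun b _ hb => ?_
    apply hmis
    simp only [Finset.mem_filter, Finset.mem_univ, true_and] at hy hb
    intro h
    exact hb (h.2 hy).symm
  have h2 : ∑ b with f b = f a, u b x
      = (∑ y with g y = g x, u a y) * (∑ b with f b = f a, u b x) := by
    conv_lhs => rw [← one_mul (∑ b with f b = f a, u b x), ← hrow a]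
    rw [Finset.mul_sum, Finset.mul_sum]
    refine Finset.sum_congr rfl fun b hb => ?_
    rw [Finset.sum_mul, Finset.sum_mul]
    symm
    refine Finset.sum_subset (Finset.filter_subset _ _) fun y _ hy => ?_
    apply hmis
    simp only [Finset.mem_filter, Finset.mem_univ, true_and] at hy hb
    intro h
    exact hy (h.1 hb.symm)
  rw [h1, ← h2]

theorem card_eq_of_magic {A I J α β : Type*} [Ring A] [CharZero A] [Fintype I] [Fintype J]
    [DecidableEq α] [DecidableEq β] (u : I → J → A) (f : I → α) (g : J → β)
    (hrow : ∀ a, ∑ x, u a x = 1) (hcol : ∀ x, ∑ a, u a x = 1)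
    (hmis : ∀ a b x y, ¬(f a = f b ↔ g x = g y) → u a x * u b y = 0)
    (E : Finset α) (F : Finset β) (hE : ∀ a, f a ∈ E) (hF : ∀ x, g x ∈ F)
    (hE' : ∀ p ∈ E, ∃ a, f a = p) (hF' : ∀ q ∈ F, ∃ x, g x = q) : E.card = F.card := by
  have hs : ∀ p : E, ∃ a, f a = p := fun p => hE' p p.2
  have ht : ∀ q : F, ∃ x, g x = q := fun q => hF' q q.2
  choose s hs using hs
  choose t ht using ht
  have h1 : ∑ p : E, ∑ q : F, ∑ y with g y = (q : β), u (s p) y = (E.card : A) := by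
    have : ∀ p : E, ∑ q : F, ∑ y with g y = (q : β), u (s p) y = 1 := by
      intro p
      rw [Finset.sum_coe_sort F (fun q => ∑ y with g y = q, u (s p) y),
        Finset.sum_fiberwise_of_maps_to (fun y _ => hF y), hrow]
    rw [Finset.sum_congr rfl fun p _ => this p]
    simp
  have h2 : ∑ q : F, ∑ p : E, ∑ b with f b = (p : α), u b (t q) = (F.card : A) := by
    have : ∀ q : F, ∑ p : E, ∑ b with f b = (p : α), u b (t q) = 1 := by
      intro q
      rw [Finset.sum_coe_sort E (fun p => ∑ b with f b = p, u b (t q)),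
        Finset.sum_fiberwise_of_maps_to (fun y _ => hE y), hcol]
    rw [Finset.sum_congr rfl fun p _ => this p]
    simp
  rw [Finset.sum_comm] at h2
  have h3 : (E.card : A) = F.card := by
    rw [← h1, ← h2]
    refine Finset.sum_congr rfl fun p _ => Finset.sum_congr rfl fun q _ => ?_
    have := key_fiber u f g hrow hcol hmis (s p) (t q)
    rwa [hs, ht] at this
  exact_mod_cast h3

theorem stmt13 {α β : Type*} [Fintype α] [Fintype β] [DecidableEq α] [DecidableEq β]
    (M : PreMatroid α) (N : PreMatroid β) (hM : M.IsMatroid) (hN : N.IsMatroid)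
    (S_M : Finset (Finset α)) (S_N : Finset (Finset β))
    (hSM : ∀ A ∈ S_M, A ⊆ M.E) (hSN : ∀ A ∈ S_N, A ⊆ N.E)
    (hcovM : Covers S_M M.E) (hcovN : Covers S_N N.E)
    (hnz : Nontrivial (MatIsoAlgebra S_M S_N)) :
    M.E.card = N.E.card := by
  have : CharZero (MatIsoAlgebra S_M S_N) := algebraRat.charZero _
  refine card_eq_of_magic (matGen S_M S_N) (fun a => a.1.2) (fun x => x.1.2)
    ?_ ?_ ?_ M.E N.E (fun a => hSM _ a.2.1 a.2.2) (fun x => hSN _ x.2.1 x.2.2) ?_ ?_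
  · intro a
    have := RingQuot.mkAlgHom_rel ℂ (IsoRel.magic (rI := ptRel S_M) (rJ := ptRel S_N)
      (MagicRel.rowSum (J := PtSet S_N) a))
    simpa [matGen, isoGen] using this
  · intro x
    have := RingQuot.mkAlgHom_rel ℂ (IsoRel.magic (rI := ptRel S_M) (rJ := ptRel S_N)
      (MagicRel.colSum (I := PtSet S_M) x))
    simpa [matGen, isoGen] using this
  · intro a b x y h
    have := RingQuot.mkAlgHom_rel ℂ (IsoRel.mismatch (rI := ptRel S_M) (rJ := ptRel S_N)
      a b x y (by
        intro h'
        apply h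
        simp only [ptRel, relNum] at h'
        split_ifs at h' <;> simp_all))
    simpa [matGen, isoGen] using this
  · intro p hp
    obtain ⟨A, hA, hpA⟩ := hcovM p hp
    exact ⟨⟨(A, p), hA, hpA⟩, rfl⟩
  · intro q hq
    obtain ⟨A, hA, hqA⟩ := hcovN q hq
    exact ⟨⟨(A, q), hA, hqA⟩, rfl⟩

end MatroidGame
end

section
/- Let M and N be matroids with collections S_M ⊆ 2^{E(M)} and S_N ⊆ 2^{E(N)}. Fix b = (B,a) ∈ S•(M) and y = (Y,x) ∈ S•(N). Then in the isomorphism algebra 𝔄•(M,N,S), the equality Σ_{t ∈ S•(N), p_t = x} u_{bt} = Σ_{s ∈ S•(M), p_s = a} u_{sy} holds. -/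
open scoped BigOperators TensorProduct

namespace MatroidGame

open PreMatroid

theorem stmt14 {α β : Type*} [Fintype α] [Fintype β] [DecidableEq α] [DecidableEq β]
    (M : PreMatroid α) (N : PreMatroid β) (hM : M.IsMatroid) (hN : N.IsMatroid)
    (S_M : Finset (Finset α)) (S_N : Finset (Finset β))
    (hSM : ∀ A ∈ S_M, A ⊆ M.E) (hSN : ∀ A ∈ S_N, A ⊆ N.E)
    (b : PtSet S_M) (y : PtSet S_N) :
    (∑ t ∈ Finset.univ.filter (fun t : PtSet S_N => t.val.2 = y.val.2),
        matGen S_M S_N b t) =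
      ∑ s ∈ Finset.univ.filter (fun s : PtSet S_M => s.val.2 = b.val.2),
        matGen S_M S_N s y := by
  classical
  have hcol : ∑ s : PtSet S_M, matGen S_M S_N s y = 1 := by
    have h := RingQuot.mkAlgHom_rel ℂ
      (IsoRel.magic (rI := ptRel S_M) (rJ := ptRel S_N) (MagicRel.colSum (I := PtSet S_M) y))
    simpa only [matGen, isoGen, map_sum, map_one] using h
  have hrow : ∑ t : PtSet S_N, matGen S_M S_N b t = 1 := by
    have h := RingQuot.mkAlgHom_rel ℂ
      (IsoRel.magic (rI := ptRel S_M) (rJ := ptRel S_N) (MagicRel.rowSum (J := PtSet S_N) b))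
    simpa only [matGen, isoGen, map_sum, map_one] using h
  have hmis : ∀ (s : PtSet S_M) (t : PtSet S_N),
      ¬ (t.val.2 = y.val.2 ↔ s.val.2 = b.val.2) →
      matGen S_M S_N b t * matGen S_M S_N s y = 0 := by
    intro s t hst
    have hne : ptRel S_M b s ≠ ptRel S_N t y := by
      intro h
      apply hst
      simp only [ptRel, relNum] at h
      rw [eq_comm (a := s.val.2)]
      split_ifs at h <;> simp_all
    have h := RingQuot.mkAlgHom_rel ℂ (IsoRel.mismatch b s t y hne)
    simpa only [matGen, isoGen, map_mul, map_zero] using h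
  set L := ∑ t ∈ Finset.univ.filter (fun t : PtSet S_N => t.val.2 = y.val.2),
        matGen S_M S_N b t with hL
  set R := ∑ s ∈ Finset.univ.filter (fun s : PtSet S_M => s.val.2 = b.val.2),
        matGen S_M S_N s y with hR
  have h1 : L * R = L := by
    conv_rhs => rw [← mul_one L, ← hcol]
    rw [hL, hR, Finset.sum_mul, Finset.sum_mul]
    refine Finset.sum_congr rfl fun t ht => ?_
    rw [Finset.mul_sum, Finset.mul_sum]
    refine Finset.sum_subset (Finset.subset_univ _) fun s _ hs => hmis s t ?_
    simp only [Finset.mem_filter, Finset.mem_univ, true_and] at ht hs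
    tauto
  have h2 : L * R = R := by
    conv_rhs => rw [← one_mul R, ← hrow]
    rw [hL, hR, Finset.mul_sum, Finset.mul_sum]
    refine Finset.sum_congr rfl fun s hs => ?_
    rw [Finset.sum_mul, Finset.sum_mul]
    refine Finset.sum_subset (Finset.subset_univ _) fun t _ ht => hmis s t ?_
    simp only [Finset.mem_filter, Finset.mem_univ, true_and] at ht hs
    tauto
  exact h1.symm.trans h2

end MatroidGame
end
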